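/- Let D ⊆ ℝ[X₁,…,Xₙ]\{0} be a multiplicatively closed set with 1 ∈ D, let S ⊆ ℝ[X₁,…,Xₙ] be finite with K_S ≠ ∅, and assume there exist p ∈ D and an integer k ≥ 1 such that p ≥ 1 on K_S and k·p − (X₁²+⋯+Xₙ²) ≥ 0 on K_S. Let K be a compact subset of ⋃_{d∈D} Z(d). Then every f ∈ ℝ[X₁,…,Xₙ] that is nonnegative on K_S \ K belongs to the closure of T_S^E in the finest locally convex topology on E = D⁻¹ℝ[X₁,…,Xₙ]; equivalently, L(f/1) ≥ 0 for every linear functional L on E with L(T_S^E) ⊆ [0,∞). -/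

import Mathlib

/-!
Let `L` be a linear functional on `E = D⁻¹ℝ[X]` which is nonnegative on `T_S^E`.

If `F ≥ 0` on all of `K_S`, then `L(F) ≥ 0` (`apply_nonneg_of_nonneg`). Indeed the growth
hypothesis on `p` bounds `F` by `M q²` on `K_S`, with `q ∈ D` a power of `p`. The
Positivstellensatz (`exists_certificate`) supplies certificates for `(M/2)² + ε - (M/2 - F/q²)² >
0`, and iterating the Cauchy–Schwarz inequality (`apply_sq_le`) turns such a certificate into the
corresponding inequality for the functional `L(q² ·)`.

If `f ≥ 0` only on `K_S \ K`, each `a ∈ K` is a zero of some `d_a ∈ D`, so `|d_a| ≤ C_a δ` on the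
part of `K` within distance `δ` of `a`. Cover `K` by finitely many balls of radii `δ_i` about
`a_i`, and let `|f| ≤ B` on `K`. With `N = n + 1`, the function `f + ∑ B (C_i δ_i)^(2N) /
d_i^(2N)` becomes nonnegative on `K_S` after multiplication by the square of the common
denominator, so `L(f) ≥ -B ∑ δ_i^(2N) M_i` with `M_i = C_i^(2N) L(d_i^(-2N))`
(`apply_add_sum_nonneg`). The numbers `M_i` are not bounded independently of the centre, but
covering the sublevel sets `{M ≤ j}` separately, with radii small in terms of `j`, makes the sum
arbitrarily small, because `δ^(-n)` balls suffice and `2N > n` (`exists_cheap_cover`). Hence `L(f)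
≥ 0`.

The Positivstellensatz is proved from scratch. A proper preordering of `ℝ[X]` is nonnegative under
a homomorphism to a real closed field (`exists_hom_of_neg_one_notMem`), obtained inside an
algebraic closure as a maximal subfield on which the preordering stays proper. Real closedness is
used in the form of the intermediate value property for polynomials. The resulting point over a
larger field is moved to `ℝⁿ` by a quantifier elimination argument (`exists_real_point`),
eliminating one variable at a time by comparing sign patterns over two fields
(`Polynomial.controlled`).
-/

open MvPolynomial MeasureTheory

noncomputable section

/-- The Euclidean (weak) topology on a real vector space; for finite-dimensional
spaces this is the usual Euclidean topology. -/
def weakTop (V : Type*) [AddCommGroup V] [Module ℝ V] : TopologicalSpace V :=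
  ⨅ L : V →ₗ[ℝ] ℝ, TopologicalSpace.induced L inferInstance

/-- The topology of finitely open sets: `O` is open iff its intersection with every
finite-dimensional subspace `U` is open in the Euclidean topology of `U`. -/
def finTop (E : Type*) [AddCommGroup E] [Module ℝ E] : TopologicalSpace E where
  IsOpen O := ∀ U : Submodule ℝ E, FiniteDimensional ℝ U →
    @IsOpen _ (weakTop U) ((Subtype.val : U → E) ⁻¹' O)
  isOpen_univ := by
    intro U _
    letI := weakTop U
    rw [Set.preimage_univ]
    exact isOpen_univ
  isOpen_inter := by
    intro s t hs ht U hU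
    letI := weakTop U
    rw [Set.preimage_inter]
    exact (hs U hU).inter (ht U hU)
  isOpen_sUnion := by
    intro s hs U hU
    letI := weakTop U
    rw [Set.preimage_sUnion]
    exact isOpen_biUnion fun t ht => hs t ht U hU

/-- The closure of a convex cone in the finest locally convex topology, via the dual
characterization: `x` lies in the closure iff `L x ≥ 0` for every linear functional `L`
nonnegative on the cone. -/
def dualClosure {E : Type*} [AddCommGroup E] [Module ℝ E] (C : Set E) : Set E :=
  {x | ∀ L : E →ₗ[ℝ] ℝ, (∀ c ∈ C, 0 ≤ L c) → 0 ≤ L x}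

/-- The preordering generated by `g 1, …, g m` in a commutative ring: all finite sums
of elements `σ • g₁^ν₁ ⋯ g_m^ν_m` with `σ` a sum of squares and `ν ∈ {0,1}^m`. -/
def genPreordering {E : Type*} [CommRing E] {m : ℕ} (g : Fin m → E) : Set E :=
  {x | ∃ σ : (Fin m → Bool) → E, (∀ ν, IsSumSq (σ ν)) ∧
    x = ∑ ν : Fin m → Bool, σ ν * ∏ j, (if ν j then g j else 1)}

/-- The basic closed semialgebraic set determined by `g 1, …, g m`. -/
def KS {n m : ℕ} (g : Fin m → MvPolynomial (Fin n) ℝ) : Set (Fin n → ℝ) :=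
  {x | ∀ i, 0 ≤ eval x (g i)}

/-- The real zero set of a polynomial. -/
def Zset {n : ℕ} (d : MvPolynomial (Fin n) ℝ) : Set (Fin n → ℝ) :=
  {x | eval x d = 0}

/-- `Pos^E(𝒳)`: elements of the localization having a representation `f/d` with
`f·d ≥ 0 pointwise on 𝒳`. -/
def PosE {n : ℕ} (D : Submonoid (MvPolynomial (Fin n) ℝ)) (X : Set (Fin n → ℝ)) :
    Set (Localization D) :=
  {R | ∃ (f : MvPolynomial (Fin n) ℝ) (d : D), R = Localization.mk f d ∧
    ∀ x ∈ X, 0 ≤ eval x f * eval x (d : MvPolynomial (Fin n) ℝ)}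

section

open scoped Polynomial

/-! ### Calculus over ordered fields with the intermediate value property -/

namespace Polynomial

/-- The intermediate value property for polynomials, which for an ordered field is equivalent to
being real closed. -/
def PolyIVT (R : Type*) [Field R] [LinearOrder R] : Prop :=
  ∀ (p : R[X]) (a b : R), a < b → p.eval a * p.eval b < 0 →
    ∃ c, a < c ∧ c < b ∧ p.eval c = 0

theorem polyIVT_real : PolyIVT ℝ := by
  intro p a b hab h
  have hc : ContinuousOn (fun x => p.eval x) (Set.Icc a b) := p.continuous.continuousOn
  rcases mul_neg_iff.1 h with ⟨h1, h2⟩ | ⟨h1, h2⟩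
  · obtain ⟨c, hc, h⟩ := intermediate_value_Ioo' hab.le hc ⟨h2, h1⟩
    exact ⟨c, hc.1, hc.2, h⟩
  · obtain ⟨c, hc, h⟩ := intermediate_value_Ioo hab.le hc ⟨h1, h2⟩
    exact ⟨c, hc.1, hc.2, h⟩

section IVT

variable {R : Type*} [Field R] [LinearOrder R] [IsStrictOrderedRing R]

theorem sign_eq_of_mul_pos {a b : R} (h : 0 < a * b) : SignType.sign a = SignType.sign b := by
  rcases mul_pos_iff.1 h with ⟨h1, h2⟩ | ⟨h1, h2⟩
  · rw [sign_pos h1, sign_pos h2]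
  · rw [sign_neg h1, sign_neg h2]

theorem PolyIVT.sign_eq_of_lt (hR : PolyIVT R) {p : R[X]} {a b : R} (hab : a < b)
    (h : ∀ c, a ≤ c → c ≤ b → p.eval c ≠ 0) :
    SignType.sign (p.eval a) = SignType.sign (p.eval b) := by
  apply sign_eq_of_mul_pos
  by_contra hn
  have h0 : p.eval a * p.eval b ≠ 0 := mul_ne_zero (h a le_rfl hab.le) (h b hab.le le_rfl)
  obtain ⟨c, h1, h2, h3⟩ := hR p a b hab (lt_of_le_of_ne (not_lt.1 hn) h0)
  exact h c h1.le h2.le h3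

theorem PolyIVT.sign_eq (hR : PolyIVT R) {p : R[X]} {l r a b : R} (ha : a ∈ Set.Ioo l r)
    (hb : b ∈ Set.Ioo l r) (h : ∀ c ∈ Set.Ioo l r, p.eval c ≠ 0) :
    SignType.sign (p.eval a) = SignType.sign (p.eval b) := by
  rcases lt_trichotomy a b with hab | rfl | hab
  · exact hR.sign_eq_of_lt hab fun c h1 h2 => h c ⟨ha.1.trans_le h1, h2.trans_lt hb.2⟩
  · rfl
  · exact (hR.sign_eq_of_lt hab fun c h1 h2 => h c ⟨hb.1.trans_le h1, h2.trans_lt ha.2⟩).symm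

/-- Rolle between consecutive roots. Writing `p = (X - a)^(m+1) (X - b)^(l+1) s`, the derivative is
`(X - a)^m (X - b)^l w` for a polynomial `w` whose values at `a` and `b` have opposite signs, because
`s` keeps its sign on `[a, b]`. -/
theorem PolyIVT.rolle_consecutive (hR : PolyIVT R) {p : R[X]} (hp : p ≠ 0) {a b : R} (hab : a < b)
    (ha : p.eval a = 0) (hb : p.eval b = 0) (h : ∀ c ∈ Set.Ioo a b, p.eval c ≠ 0) :
    ∃ c ∈ Set.Ioo a b, (derivative p).eval c = 0 := by
  obtain ⟨q, hq, hqa⟩ := exists_eq_pow_rootMultiplicity_mul_and_not_dvd p hp a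
  have hq0 : q ≠ 0 := by rintro rfl; simp at hqa
  obtain ⟨s, hs, hsb⟩ := exists_eq_pow_rootMultiplicity_mul_and_not_dvd q hq0 b
  have hm : 0 < p.rootMultiplicity a := (rootMultiplicity_pos hp).2 ha
  have hqb : q.eval b = 0 := by
    have := hb
    rw [hq] at this
    simpa [sub_eq_zero, hab.ne'] using this
  have hl : 0 < q.rootMultiplicity b := (rootMultiplicity_pos hq0).2 hqb
  obtain ⟨m, hm'⟩ := Nat.exists_eq_succ_of_ne_zero hm.ne'
  obtain ⟨l, hl'⟩ := Nat.exists_eq_succ_of_ne_zero hl.ne'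
  rw [hm'] at hq
  rw [hl'] at hs
  have hsa0 : s.eval a ≠ 0 := by
    intro h0
    apply hqa
    rw [hs]
    exact (dvd_iff_isRoot.2 h0).mul_left _
  have hsb0 : s.eval b ≠ 0 := fun h0 => hsb (dvd_iff_isRoot.2 h0)
  have hpe : p = (X - C a) ^ (m + 1) * ((X - C b) ^ (l + 1) * s) := by rw [← hs]; exact hq
  have hsign : SignType.sign (s.eval a) = SignType.sign (s.eval b) := by
    apply hR.sign_eq_of_lt hab
    intro c h1 h2
    rcases h1.eq_or_lt with rfl | h1
    · exact hsa0
    rcases h2.eq_or_lt with rfl | h2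
    · exact hsb0
    intro h0
    exact h c ⟨h1, h2⟩ (by rw [hpe]; simp [h0])
  have hsab : 0 < s.eval a * s.eval b := by
    rcases lt_or_gt_of_ne hsa0 with h1 | h1
    · rw [sign_neg h1, eq_comm, sign_eq_neg_one_iff] at hsign
      exact mul_pos_of_neg_of_neg h1 hsign
    · rw [sign_pos h1, eq_comm, sign_eq_one_iff] at hsign
      exact mul_pos h1 hsign
  set w : R[X] := C ((m : R) + 1) * (X - C b) * s + C ((l : R) + 1) * (X - C a) * s
    + (X - C a) * (X - C b) * derivative s with hw
  have hd : derivative p = (X - C a) ^ m * (X - C b) ^ l * w := by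
    rw [hpe, hw]
    simp only [derivative_mul, derivative_X_sub_C_pow, Nat.add_sub_cancel]
    simp only [Nat.cast_add, Nat.cast_one, map_add, map_natCast, map_one]
    ring
  obtain ⟨c, h1, h2, h3⟩ := hR w a b hab (by
    have e1 : w.eval a = ((m : R) + 1) * (a - b) * s.eval a := by simp [hw]
    have e2 : w.eval b = ((l : R) + 1) * (b - a) * s.eval b := by simp [hw]
    rw [e1, e2]
    have : 0 < ((m : R) + 1) * ((l : R) + 1) * (b - a) ^ 2 * (s.eval a * s.eval b) := by
      have : 0 < b - a := sub_pos.2 hab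
      positivity
    linarith)
  exact ⟨c, ⟨h1, h2⟩, by rw [hd]; simp [h3]⟩

theorem PolyIVT.rolle (hR : PolyIVT R) {p : R[X]} (hp : p ≠ 0) {a b : R} (hab : a < b)
    (ha : p.eval a = 0) (hb : p.eval b = 0) :
    ∃ c ∈ Set.Ioo a b, (derivative p).eval c = 0 := by
  -- `b'` is the smallest root to the right of `a`
  have hne : (p.roots.toFinset.filter (a < ·)).Nonempty := ⟨b, by simp [hp, hb, hab]⟩
  set b' := (p.roots.toFinset.filter (a < ·)).min' hne with hb'
  have hmem := Finset.min'_mem _ hne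
  rw [← hb'] at hmem
  simp only [Finset.mem_filter, Multiset.mem_toFinset, mem_roots hp, IsRoot.def] at hmem
  have hle : b' ≤ b := Finset.min'_le _ _ (by simp [hp, hb, hab])
  obtain ⟨c, hc, h⟩ := hR.rolle_consecutive hp hmem.2 ha hmem.1 (by
    intro c hc h0
    have : b' ≤ c := Finset.min'_le _ _ (by simp [hp, h0, hc.1])
    exact absurd hc.2 (not_lt.2 this))
  exact ⟨c, ⟨hc.1, hc.2.trans_le hle⟩, h⟩

theorem PolyIVT.mvt (hR : PolyIVT R) (p : R[X]) {a b : R} (hab : a < b) :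
    ∃ c ∈ Set.Ioo a b, p.eval b - p.eval a = (derivative p).eval c * (b - a) := by
  set s := (p.eval b - p.eval a) / (b - a) with hs
  have hba : b - a ≠ 0 := (sub_pos.2 hab).ne'
  have hs' : s * (b - a) = p.eval b - p.eval a := by rw [hs]; field_simp
  by_cases h0 : p - C s * (X - C a) - C (p.eval a) = 0
  · obtain ⟨c, h1, h2⟩ := exists_between hab
    refine ⟨c, ⟨h1, h2⟩, ?_⟩
    have : derivative (p - C s * (X - C a) - C (p.eval a)) = 0 := by rw [h0]; simp
    have := congrArg (eval c) this
    simp [sub_eq_zero] at this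
    rw [this, hs']
  · obtain ⟨c, hc, h⟩ := hR.rolle h0 hab (by simp) (by simp [hs'])
    refine ⟨c, hc, ?_⟩
    simp [sub_eq_zero] at h
    rw [h, hs']

/-- A nonzero value keeps its sign at some point slightly to the right. -/
theorem PolyIVT.exists_right (hR : PolyIVT R) (p : R[X]) {a b : R} (hab : a < b)
    (ha : p.eval a ≠ 0) :
    ∃ c ∈ Set.Ioo a b, SignType.sign (p.eval c) = SignType.sign (p.eval a) := by
  have hp : p ≠ 0 := by rintro rfl; simp at ha
  have hne : (insert b (p.roots.toFinset.filter (a < ·))).Nonempty := Finset.insert_nonempty _ _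
  set b' := (insert b (p.roots.toFinset.filter (a < ·))).min' hne with hb'
  have hmem := Finset.min'_mem _ hne
  rw [← hb'] at hmem
  have hab' : a < b' := by
    rcases Finset.mem_insert.1 hmem with h | h
    · rw [h]; exact hab
    · exact (Finset.mem_filter.1 h).2
  have hle : b' ≤ b := Finset.min'_le _ _ (Finset.mem_insert_self _ _)
  obtain ⟨c, h1, h2⟩ := exists_between hab'
  refine ⟨c, ⟨h1, h2.trans_le hle⟩, (hR.sign_eq_of_lt h1 ?_).symm⟩
  intro x hx1 hx2 h0
  rcases hx1.eq_or_lt with rfl | hx1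
  · exact ha h0
  have : b' ≤ x := Finset.min'_le _ _ (by simp [hp, h0, hx1])
  exact absurd (hx2.trans_lt h2) (not_lt.2 this)

theorem PolyIVT.exists_left (hR : PolyIVT R) (p : R[X]) {a b : R} (hab : a < b)
    (hb : p.eval b ≠ 0) :
    ∃ c ∈ Set.Ioo a b, SignType.sign (p.eval c) = SignType.sign (p.eval b) := by
  obtain ⟨c, hc, h⟩ := hR.exists_right (p.comp (-X)) (neg_lt_neg hab) (by simpa using hb)
  exact ⟨-c, ⟨lt_neg.1 hc.2, neg_lt.1 hc.1⟩, by simpa using h⟩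

/-- Near `+∞` a polynomial over an ordered field has the sign of its leading coefficient. No
intermediate value property is needed. -/
theorem exists_forall_sign_eq_leadingCoeff (p : R[X]) :
    ∃ N : R, ∀ x, N ≤ x → SignType.sign (p.eval x) = SignType.sign p.leadingCoeff := by
  -- a nonconstant polynomial with positive leading coefficient exceeds every bound
  have key : ∀ (n : ℕ) (p : R[X]), p.natDegree = n + 1 → 0 < p.leadingCoeff → ∀ K : R,
      ∃ N : R, ∀ x, N ≤ x → K ≤ p.eval x := by
    intro n
    induction n with
    | zero =>
      intro p hn hp K
      refine ⟨(K - p.coeff 0) / p.coeff 1, fun x hx => ?_⟩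
      rw [leadingCoeff, hn] at hp
      rw [eq_X_add_C_of_natDegree_le_one hn.le]
      simp only [eval_add, eval_mul, eval_C, eval_X]
      rw [div_le_iff₀ (by simpa using hp)] at hx
      linarith
    | succ n ih =>
      intro p hn hp K
      have hd : p.divX.natDegree = n + 1 := by rw [natDegree_divX_eq_natDegree_tsub_one, hn]; rfl
      obtain ⟨N, hN⟩ := ih p.divX hd (by
        rw [leadingCoeff, hd, coeff_divX]
        rwa [leadingCoeff, hn] at hp) (max 0 (K - p.coeff 0))
      refine ⟨max N 1, fun x hx => ?_⟩
      have h1 := hN x ((le_max_left _ _).trans hx)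
      have h2 : 1 ≤ x := (le_max_right _ _).trans hx
      rw [← divX_mul_X_add p]
      simp only [eval_add, eval_mul, eval_C, eval_X]
      have h3 : 0 ≤ p.divX.eval x := (le_max_left _ _).trans h1
      have h4 : K - p.coeff 0 ≤ p.divX.eval x := (le_max_right _ _).trans h1
      nlinarith
  have pos : ∀ p : R[X], 0 < p.leadingCoeff → ∃ N : R, ∀ x, N ≤ x → 0 < p.eval x := by
    intro p hp
    rcases Nat.eq_zero_or_pos p.natDegree with h | h
    · refine ⟨0, fun x _ => ?_⟩
      rw [eq_C_of_natDegree_eq_zero h] at hp ⊢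
      simpa using hp
    · obtain ⟨N, hN⟩ := key (p.natDegree - 1) p (by omega) hp 1
      exact ⟨N, fun x hx => zero_lt_one.trans_le (hN x hx)⟩
  rcases lt_trichotomy p.leadingCoeff 0 with h | h | h
  · obtain ⟨N, hN⟩ := pos (-p) (by simpa using h)
    refine ⟨N, fun x hx => ?_⟩
    rw [sign_neg h, sign_neg (by simpa using hN x hx)]
  · rw [leadingCoeff_eq_zero] at h
    exact ⟨0, by simp [h]⟩
  · obtain ⟨N, hN⟩ := pos p h
    exact ⟨N, fun x hx => by rw [sign_pos h, sign_pos (hN x hx)]⟩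

/-- The sign of a polynomial near `-∞`. -/
theorem exists_forall_sign_eq_neg (p : R[X]) :
    ∃ N : R, ∀ x, N ≤ x →
      SignType.sign (p.eval (-x)) = SignType.sign ((-1) ^ p.natDegree * p.leadingCoeff) := by
  obtain ⟨N, hN⟩ := exists_forall_sign_eq_leadingCoeff (p.comp (-X))
  refine ⟨N, fun x hx => ?_⟩
  have := hN x hx
  rw [leadingCoeff_comp (by simp)] at this
  simpa [mul_comm] using this

end IVT
end Polynomial

/-! ### Matching sign conditions over two ordered fields -/

namespace Polynomial

/-- Two points which no root of `p` separates, or meets, give `p` the same sign. -/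
theorem PolyIVT.sign_eq_of_roots {R : Type*} [Field R] [LinearOrder R] [IsStrictOrderedRing R]
    (hR : PolyIVT R) {p : R[X]} {a b : R}
    (h : ∀ c, p.eval c = 0 → (c < a ∧ c < b) ∨ (a < c ∧ b < c)) :
    SignType.sign (p.eval a) = SignType.sign (p.eval b) := by
  rcases lt_trichotomy a b with hab | rfl | hab
  · refine hR.sign_eq_of_lt hab fun c h1 h2 h0 => ?_
    rcases h c h0 with h | h
    · exact absurd h.1 (not_lt.2 h1)
    · exact absurd h.2 (not_lt.2 h2)
  · rfl
  · refine (hR.sign_eq_of_lt hab fun c h1 h2 h0 => ?_).symm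
    rcases h c h0 with h | h
    · exact absurd h.2 (not_lt.2 h1)
    · exact absurd h.1 (not_lt.2 h2)

theorem exists_bound {R : Type*} [Field R] [LinearOrder R] [IsStrictOrderedRing R]
    (S : Finset R) (N : R) : ∃ M : R, 0 < M ∧ N ≤ M ∧ ∀ x ∈ S, -M < x ∧ x < M := by
  refine ⟨|N| + ∑ x ∈ S, |x| + 1, ?_, ?_, ?_⟩
  · have : 0 ≤ ∑ x ∈ S, |x| := Finset.sum_nonneg fun _ _ => abs_nonneg _
    positivity
  · have : 0 ≤ ∑ x ∈ S, |x| := Finset.sum_nonneg fun _ _ => abs_nonneg _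
    linarith [le_abs_self N]
  · intro x hx
    rw [← abs_lt]
    have : |x| ≤ ∑ x ∈ S, |x| :=
      Finset.single_le_sum (f := fun x => |x|) (fun _ _ => abs_nonneg _) hx
    linarith [abs_nonneg N]

set_option linter.unusedSectionVars false

variable {R₁ R₂ : Type*} [Field R₁] [LinearOrder R₁] [IsStrictOrderedRing R₁]
  [Field R₂] [LinearOrder R₂] [IsStrictOrderedRing R₂]

/-- If `P₁` is monotone on `(l, r)` and has the same signs at the endpoints as `P₂` has at the ends of
another interval, then every sign that `P₁` takes inside its interval is taken by `P₂` inside the other. -/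
theorem exists_sign_between (h₁ : PolyIVT R₁) (h₂ : PolyIVT R₂) {P₁ : R₁[X]} {P₂ : R₂[X]}
    (hP₁ : P₁ ≠ 0) {l x r : R₁} (hl : l < x) (hr : x < r)
    (hd : derivative P₁ = 0 ∨ ∀ c ∈ Set.Ioo l r, (derivative P₁).eval c ≠ 0)
    {l' r' : R₂} (hlr : l' < r')
    (hsl : SignType.sign (P₁.eval l) = SignType.sign (P₂.eval l'))
    (hsr : SignType.sign (P₁.eval r) = SignType.sign (P₂.eval r')) :
    ∃ y ∈ Set.Ioo l' r', SignType.sign (P₂.eval y) = SignType.sign (P₁.eval x) := by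
  obtain ⟨c₁, hc₁, e₁⟩ := h₁.mvt P₁ hl
  obtain ⟨c₂, hc₂, e₂⟩ := h₁.mvt P₁ hr
  have hxl : 0 < x - l := sub_pos.2 hl
  have hrx : 0 < r - x := sub_pos.2 hr
  have key : (P₁.eval l = P₁.eval x ∧ P₁.eval x ≠ 0) ∨
      (P₁.eval l < P₁.eval x ∧ P₁.eval x < P₁.eval r) ∨
      (P₁.eval x < P₁.eval l ∧ P₁.eval r < P₁.eval x) := by
    rcases hd with hd | hd
    · left
      have hc := derivative_eq_zero.1 hd
      rw [eq_C_of_natDegree_eq_zero hc] at hP₁ ⊢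
      simpa using hP₁
    · right
      have hs := h₁.sign_eq (a := c₁) (b := c₂) ⟨hc₁.1, hc₁.2.trans hr⟩ ⟨hl.trans hc₂.1, hc₂.2⟩ hd
      rcases lt_or_gt_of_ne (hd c₁ ⟨hc₁.1, hc₁.2.trans hr⟩) with h | h
      · right
        rw [sign_neg h, eq_comm, sign_eq_neg_one_iff] at hs
        have := mul_neg_of_neg_of_pos h hxl
        have := mul_neg_of_neg_of_pos hs hrx
        constructor <;> linarith
      · left
        rw [sign_pos h, eq_comm, sign_eq_one_iff] at hs
        have := mul_pos h hxl
        have := mul_pos hs hrx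
        constructor <;> linarith
  have hleft : P₁.eval x ≠ 0 → SignType.sign (P₁.eval l) = SignType.sign (P₁.eval x) →
      ∃ y ∈ Set.Ioo l' r', SignType.sign (P₂.eval y) = SignType.sign (P₁.eval x) := by
    intro hx h
    obtain ⟨y, hy, e⟩ := h₂.exists_right P₂ hlr (by
      rw [← sign_ne_zero, ← hsl, h, sign_ne_zero]; exact hx)
    exact ⟨y, hy, by rw [e, ← hsl, h]⟩
  have hright : P₁.eval x ≠ 0 → SignType.sign (P₁.eval r) = SignType.sign (P₁.eval x) →
      ∃ y ∈ Set.Ioo l' r', SignType.sign (P₂.eval y) = SignType.sign (P₁.eval x) := by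
    intro hx h
    obtain ⟨y, hy, e⟩ := h₂.exists_left P₂ hlr (by
      rw [← sign_ne_zero, ← hsr, h, sign_ne_zero]; exact hx)
    exact ⟨y, hy, by rw [e, ← hsr, h]⟩
  rcases key with ⟨h, hx⟩ | ⟨h, h'⟩ | ⟨h, h'⟩
  · exact hleft hx (by rw [h])
  · rcases lt_trichotomy (P₁.eval x) 0 with hx | hx | hx
    · exact hleft hx.ne (by rw [sign_neg hx, sign_neg (h.trans hx)])
    · rw [hx] at h h'
      rw [sign_neg h, eq_comm, sign_eq_neg_one_iff] at hsl
      rw [sign_pos h', eq_comm, sign_eq_one_iff] at hsr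
      obtain ⟨y, hy1, hy2, hy⟩ := h₂ P₂ l' r' hlr (mul_neg_of_neg_of_pos hsl hsr)
      exact ⟨y, ⟨hy1, hy2⟩, by rw [hy, hx]; simp⟩
    · exact hright hx.ne' (by rw [sign_pos hx, sign_pos (hx.trans h')])
  · rcases lt_trichotomy (P₁.eval x) 0 with hx | hx | hx
    · exact hright hx.ne (by rw [sign_neg hx, sign_neg (h'.trans hx)])
    · rw [hx] at h h'
      rw [sign_pos h, eq_comm, sign_eq_one_iff] at hsl
      rw [sign_neg h', eq_comm, sign_eq_neg_one_iff] at hsr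
      obtain ⟨y, hy1, hy2, hy⟩ := h₂ P₂ l' r' hlr (mul_neg_of_pos_of_neg hsl hsr)
      exact ⟨y, ⟨hy1, hy2⟩, by rw [hy, hx]; simp⟩
    · exact hleft hx.ne' (by rw [sign_pos hx, sign_pos (hx.trans h)])

/-- Every finite configuration of points of `R₁` can be copied into `R₂` in an order-preserving way,
so that the members of `Q`, specialized along `φ₁` and `φ₂`, have the same signs at corresponding
points. -/
def SignMatch {B : Type*} [CommRing B] (Q : Finset B[X]) (φ₁ : B →+* R₁) (φ₂ : B →+* R₂) : Prop :=
  ∀ A : Finset R₁, ∃ h : R₁ → R₂, StrictMonoOn h A ∧ ∀ x ∈ A, ∀ q ∈ Q,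
    SignType.sign ((q.map φ₁).eval x) = SignType.sign ((q.map φ₂).eval (h x))

theorem SignMatch.mono {B : Type*} [CommRing B] {Q Q' : Finset B[X]} {φ₁ : B →+* R₁}
    {φ₂ : B →+* R₂} (h : SignMatch Q φ₁ φ₂) (hQ : Q' ⊆ Q) : SignMatch Q' φ₁ φ₂ := by
  intro A
  obtain ⟨k, hk, hk'⟩ := h A
  exact ⟨k, hk, fun x hx q hq => hk' x hx q (hQ hq)⟩

open Classical in
/-- The inductive step of the transfer of sign conditions: a polynomial `p` can be added to `Q₀`,
provided `Q₀` contains its derivative and the sign of `p` at a root of a member of `Q₀` is determined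
by the signs of a larger matched family `Q`. The roots of `Q₀` in the two fields correspond
monotonically; between consecutive roots `p` is monotone, so `exists_sign_between` applies. -/
theorem SignMatch.step {B : Type*} [CommRing B] (h₁ : PolyIVT R₁) (h₂ : PolyIVT R₂)
    {Q₀ Q : Finset B[X]} {φ₁ : B →+* R₁} {φ₂ : B →+* R₂} (hQ : Q₀ ⊆ Q) (p : B[X])
    (hd : derivative p ∈ Q₀) (hm : SignMatch Q φ₁ φ₂) (hm' : SignMatch Q φ₂ φ₁)
    (hz : ∀ q ∈ Q₀, q.map φ₁ = 0 ↔ q.map φ₂ = 0) (hp0 : p.map φ₁ ≠ 0)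
    (hdeg : (p.map φ₁).natDegree = (p.map φ₂).natDegree)
    (hlc : SignType.sign (p.map φ₁).leadingCoeff = SignType.sign (p.map φ₂).leadingCoeff)
    (hs : ∀ q ∈ Q₀, q.map φ₁ ≠ 0 → ∀ x y, (q.map φ₁).eval x = 0 → (q.map φ₂).eval y = 0 →
      (∀ r ∈ Q, SignType.sign ((r.map φ₁).eval x) = SignType.sign ((r.map φ₂).eval y)) →
      SignType.sign ((p.map φ₁).eval x) = SignType.sign ((p.map φ₂).eval y)) :
    SignMatch (insert p Q₀) φ₁ φ₂ := by
  intro A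
  set Z₁ : Finset R₁ := Q₀.biUnion fun q => (q.map φ₁).roots.toFinset with hZ₁
  set Z₂ : Finset R₂ := Q₀.biUnion fun q => (q.map φ₂).roots.toFinset with hZ₂
  have mem₁ : ∀ x, x ∈ Z₁ ↔ ∃ q ∈ Q₀, q.map φ₁ ≠ 0 ∧ (q.map φ₁).eval x = 0 := by
    intro x; simp [hZ₁]
  have mem₂ : ∀ x, x ∈ Z₂ ↔ ∃ q ∈ Q₀, q.map φ₂ ≠ 0 ∧ (q.map φ₂).eval x = 0 := by
    intro x; simp [hZ₂]
  obtain ⟨h, hmono, hsign⟩ := hm (Z₁ ∪ A)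
  obtain ⟨k, kmono, ksign⟩ := hm' Z₂
  have hmaps : ∀ z ∈ Z₁, h z ∈ Z₂ := by
    intro z hz'
    obtain ⟨q, hq, hq0, hqz⟩ := (mem₁ z).1 hz'
    refine (mem₂ _).2 ⟨q, hq, fun h0 => hq0 ((hz q hq).2 h0), ?_⟩
    have := hsign z (Finset.mem_union_left _ hz') q (hQ hq)
    rwa [hqz, sign_zero, eq_comm, sign_eq_zero_iff] at this
  have kmaps : ∀ z ∈ Z₂, k z ∈ Z₁ := by
    intro z hz'
    obtain ⟨q, hq, hq0, hqz⟩ := (mem₂ z).1 hz'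
    refine (mem₁ _).2 ⟨q, hq, fun h0 => hq0 ((hz q hq).1 h0), ?_⟩
    have := ksign z hz' q (hQ hq)
    rwa [hqz, sign_zero, eq_comm, sign_eq_zero_iff] at this
  -- `k` injects `Z₂` into `Z₁`, so the injection `h : Z₁ → Z₂` is onto
  have hcard : Z₂.card ≤ Z₁.card :=
    Finset.card_le_card_of_injOn k kmaps kmono.injOn
  have hsub : (Z₁ : Set R₁) ⊆ ((Z₁ ∪ A : Finset R₁) : Set R₁) := by simp
  have hsurj : ∀ z' ∈ Z₂, ∃ z ∈ Z₁, h z = z' := by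
    have := Finset.surjOn_of_injOn_of_card_le h hmaps (hmono.injOn.mono hsub) hcard
    intro z' hz'
    obtain ⟨z, hz, e⟩ := this hz'
    exact ⟨z, hz, e⟩
  have hpZ : ∀ z ∈ Z₁,
      SignType.sign ((p.map φ₁).eval z) = SignType.sign ((p.map φ₂).eval (h z)) := by
    intro z hz'
    obtain ⟨q, hq, hq0, hqz⟩ := (mem₁ z).1 hz'
    have hsz := hsign z (Finset.mem_union_left _ hz')
    refine hs q hq hq0 z (h z) hqz ?_ hsz
    have := hsz q (hQ hq)
    rwa [hqz, sign_zero, eq_comm, sign_eq_zero_iff] at this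
  -- endpoints `±M₁`, `±M₂` beyond all relevant points, where `p` has its sign at infinity
  obtain ⟨N₁, hN₁⟩ := exists_forall_sign_eq_leadingCoeff (p.map φ₁)
  obtain ⟨N₁', hN₁'⟩ := exists_forall_sign_eq_neg (p.map φ₁)
  obtain ⟨N₂, hN₂⟩ := exists_forall_sign_eq_leadingCoeff (p.map φ₂)
  obtain ⟨N₂', hN₂'⟩ := exists_forall_sign_eq_neg (p.map φ₂)
  obtain ⟨M₁, hM₁0, hM₁N, hM₁⟩ := exists_bound (Z₁ ∪ A) (max N₁ N₁')
  obtain ⟨M₂, hM₂0, hM₂N, hM₂⟩ := exists_bound Z₂ (max N₂ N₂')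
  have hpM : SignType.sign ((p.map φ₁).eval M₁) = SignType.sign ((p.map φ₂).eval M₂) := by
    rw [hN₁ _ ((le_max_left _ _).trans hM₁N), hN₂ _ ((le_max_left _ _).trans hM₂N), hlc]
  have hpM' : SignType.sign ((p.map φ₁).eval (-M₁)) = SignType.sign ((p.map φ₂).eval (-M₂)) := by
    rw [hN₁' _ ((le_max_right _ _).trans hM₁N), hN₂' _ ((le_max_right _ _).trans hM₂N), hdeg,
      sign_mul, sign_mul, hlc, sign_pow, sign_pow]
    simp
  set W : Finset R₁ := insert M₁ (insert (-M₁) Z₁) with hW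
  have claim : ∀ A' : Finset R₁, A' ⊆ A → ∃ k : R₁ → R₂, StrictMonoOn k (W ∪ A' : Finset R₁) ∧
      (∀ z ∈ Z₁, k z = h z) ∧
      (∀ x ∈ W ∪ A',
        SignType.sign ((p.map φ₁).eval x) = SignType.sign ((p.map φ₂).eval (k x))) ∧
      (∀ x ∈ A', ∀ q ∈ Q₀,
        SignType.sign ((q.map φ₁).eval x) = SignType.sign ((q.map φ₂).eval (k x))) := by
    intro A'
    induction A' using Finset.induction_on with
    | empty =>
      intro _
      refine ⟨fun x => if x = M₁ then M₂ else if x = -M₁ then -M₂ else h x, ?_, ?_, ?_, ?_⟩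
      · have hMM : -M₁ ≠ M₁ := by linarith
        intro x hx y hy hxy
        simp only [hW, Finset.union_empty, Finset.coe_insert, Set.mem_insert_iff,
          Finset.mem_coe] at hx hy
        have hb : ∀ z ∈ Z₁, -M₁ < z ∧ z < M₁ := fun z hz => hM₁ z (Finset.mem_union_left _ hz)
        have hb' : ∀ z ∈ Z₁, -M₂ < h z ∧ h z < M₂ := fun z hz => hM₂ _ (hmaps z hz)
        rcases hx with rfl | rfl | hx <;> rcases hy with rfl | rfl | hy
        · exact absurd hxy (lt_irrefl _)
        · linarith
        · linarith [hb y hy]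
        · simp only [hMM, if_true, if_false]; linarith
        · exact absurd hxy (lt_irrefl _)
        · simp only [hMM, if_true, if_false, (hb y hy).1.ne', (hb y hy).2.ne]
          exact (hb' y hy).1
        · simp only [if_true, if_false, (hb x hx).1.ne', (hb x hx).2.ne]
          exact (hb' x hx).2
        · linarith [hb x hx]
        · simp only [if_false, (hb x hx).1.ne', (hb x hx).2.ne, (hb y hy).1.ne', (hb y hy).2.ne]
          exact hmono (hsub hx) (hsub hy) hxy
      · intro z hz'
        have := hM₁ z (Finset.mem_union_left _ hz')
        simp [this.1.ne', this.2.ne]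
      · intro x hx
        have hMM : -M₁ ≠ M₁ := by linarith
        simp only [hW, Finset.union_empty, Finset.mem_insert] at hx
        rcases hx with rfl | rfl | hx
        · simpa using hpM
        · simpa [hMM] using hpM'
        · have := hM₁ x (Finset.mem_union_left _ hx)
          simpa [this.1.ne', this.2.ne] using hpZ x hx
      · simp
    | insert x A' hxA' ih =>
      intro hA'
      obtain ⟨k, kmono, kZ, kp, kQ⟩ := ih fun y hy => hA' (Finset.mem_insert_of_mem hy)
      have hxA : x ∈ A := hA' (Finset.mem_insert_self _ _)
      have hxM := hM₁ x (Finset.mem_union_right _ hxA)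
      by_cases hxW : x ∈ W ∪ A'
      · have hxZ : x ∈ Z₁ := by
          simpa [hW, hxM.1.ne', hxM.2.ne, hxA'] using hxW
        have hU : W ∪ insert x A' = W ∪ A' := by
          rw [Finset.union_insert, Finset.insert_eq_self.2 hxW]
        refine ⟨k, by rwa [hU], kZ, by rwa [hU], ?_⟩
        intro y hy q hq
        rcases Finset.mem_insert.1 hy with rfl | hy
        · rw [kZ _ hxZ]
          exact hsign _ (Finset.mem_union_left _ hxZ) q (hQ hq)
        · exact kQ y hy q hq
      · set V := W ∪ A' with hV
        have hZV : ∀ z ∈ Z₁, z ∈ V := fun z hz => by simp [hV, hW, hz]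
        have hxZ : x ∉ Z₁ := fun h0 => hxW (hZV x h0)
        have hlne : (V.filter (· < x)).Nonempty := ⟨-M₁, by simp [hV, hW, hxM.1]⟩
        have hrne : (V.filter (x < ·)).Nonempty := ⟨M₁, by simp [hV, hW, hxM.2]⟩
        set l := (V.filter (· < x)).max' hlne with hl
        set r := (V.filter (x < ·)).min' hrne with hr
        have hlmem := Finset.mem_filter.1 (Finset.max'_mem _ hlne)
        have hrmem := Finset.mem_filter.1 (Finset.min'_mem _ hrne)
        rw [← hl] at hlmem
        rw [← hr] at hrmem
        have hlmax : ∀ v ∈ V, v < x → v ≤ l := fun v hv hvx =>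
          Finset.le_max' _ _ (Finset.mem_filter.2 ⟨hv, hvx⟩)
        have hrmin : ∀ v ∈ V, x < v → r ≤ v := fun v hv hvx =>
          Finset.min'_le _ _ (Finset.mem_filter.2 ⟨hv, hvx⟩)
        have hklr : k l < k r := kmono hlmem.1 hrmem.1 (hlmem.2.trans hrmem.2)
        obtain ⟨y, hy, hys⟩ := exists_sign_between h₁ h₂ (P₁ := p.map φ₁) (P₂ := p.map φ₂) hp0
          hlmem.2 hrmem.2 (by
            rw [or_iff_not_imp_left]
            intro hd0 c hc h0
            rw [derivative_map] at hd0 h0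
            have hcV := hZV c ((mem₁ c).2 ⟨_, hd, hd0, h0⟩)
            rcases lt_trichotomy c x with hcx | rfl | hcx
            · exact absurd hc.1 (not_lt.2 (hlmax c hcV hcx))
            · exact hxW hcV
            · exact absurd hc.2 (not_lt.2 (hrmin c hcV hcx)))
          hklr (kp l hlmem.1) (kp r hrmem.1)
        have hlow : ∀ v ∈ V, v < x → k v < y := fun v hv hvx =>
          (kmono.monotoneOn hv hlmem.1 (hlmax v hv hvx)).trans_lt hy.1
        have hupp : ∀ v ∈ V, x < v → y < k v := fun v hv hvx =>
          hy.2.trans_le (kmono.monotoneOn hrmem.1 hv (hrmin v hv hvx))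
        have hne : ∀ v ∈ V, v ≠ x := fun v hv h0 => hxW (h0 ▸ hv)
        have hup : ∀ v ∈ V, Function.update k x y v = k v := fun v hv =>
          Function.update_of_ne (hne v hv) _ _
        refine ⟨Function.update k x y, ?_, ?_, ?_, ?_⟩
        · rw [Finset.union_insert, ← hV]
          intro u hu v hv huv
          rcases Finset.mem_insert.1 hu with rfl | hu' <;>
            rcases Finset.mem_insert.1 hv with rfl | hv'
          · exact absurd huv (lt_irrefl _)
          · rw [hup v hv', Function.update_self]; exact hupp v hv' huv
          · rw [hup u hu', Function.update_self]; exact hlow u hu' huv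
          · rw [hup u hu', hup v hv']; exact kmono hu' hv' huv
        · intro z hz'
          rw [hup z (hZV z hz'), kZ z hz']
        · rw [Finset.union_insert, ← hV]
          intro u hu
          rcases Finset.mem_insert.1 hu with rfl | hu
          · rw [Function.update_self, hys]
          · rw [hup u hu]; exact kp u hu
        · intro u hu q hq
          rcases Finset.mem_insert.1 hu with rfl | hu
          · rw [Function.update_self, hsign u (Finset.mem_union_right _ hxA) q (hQ hq)]
            -- no root of a member of `Q₀` separates `y` from `h u`
            by_cases hq0 : q.map φ₂ = 0
            · simp [hq0]
            apply h₂.sign_eq_of_roots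
            intro c hc
            obtain ⟨z, hz', rfl⟩ := hsurj c ((mem₂ c).2 ⟨q, hq, hq0, hc⟩)
            have hxU : u ∈ ((Z₁ ∪ A : Finset R₁) : Set R₁) := by simp [hxA]
            rcases lt_trichotomy z u with hzu | rfl | hzu
            · exact .inl ⟨hmono (hsub hz') hxU hzu, kZ z hz' ▸ hlow z (hZV z hz') hzu⟩
            · exact absurd hz' hxZ
            · exact .inr ⟨hmono hxU (hsub hz') hzu, kZ z hz' ▸ hupp z (hZV z hz') hzu⟩
          · rw [hup u (by simp [hV, hu])]; exact kQ u hu q hq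
  obtain ⟨k, kmono, -, kp, kQ⟩ := claim A subset_rfl
  refine ⟨k, kmono.mono (by intro x hx; simp at hx ⊢; exact .inr hx), ?_⟩
  intro x hx q hq
  rcases Finset.mem_insert.1 hq with rfl | hq
  · exact kp x (Finset.mem_union_right _ hx)
  · exact kQ x hx q hq

end Polynomial

/-! ### Elimination of one variable -/

namespace Polynomial

/-- Pseudo-division of `p` by a polynomial `q` whose coefficients above degree `j` vanish; the
coefficient of degree `j` may be a zero divisor. -/
theorem exists_pseudo_div {B : Type*} [CommRing B] (q : B[X]) (j : ℕ) (hq : ∀ i, j < i → q.coeff i = 0)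
    (N : ℕ) : ∀ p : B[X], p.degree < N →
      ∃ (m : ℕ) (s r : B[X]), C (q.coeff j ^ m) * p = q * s + r ∧ r.degree < j := by
  induction N with
  | zero => exact fun p hp => ⟨0, 0, p, by simp, hp.trans_le (by exact_mod_cast Nat.zero_le j)⟩
  | succ N ih =>
    intro p hp
    rcases Nat.lt_or_ge N j with hj | hj
    · exact ⟨0, 0, p, by simp, hp.trans_le (by exact_mod_cast hj)⟩
    obtain ⟨m, s, r, e, hr⟩ := ih (C (q.coeff j) * p - C (p.coeff N) * X ^ (N - j) * q) (by
      rw [degree_lt_iff_coeff_zero] at hp ⊢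
      intro i hi
      rw [mul_assoc, coeff_sub, coeff_C_mul, coeff_C_mul, coeff_X_pow_mul', if_pos ((Nat.sub_le N j).trans hi)]
      rcases Nat.lt_or_ge N i with h | h
      · rw [hp i h, hq (i - (N - j)) (by omega)]; simp
      · obtain rfl : i = N := by omega
        rw [show i - (i - j) = j by omega]; ring)
    refine ⟨m + 1, s + C (q.coeff j ^ m) * C (p.coeff N) * X ^ (N - j), r, ?_, hr⟩
    rw [pow_succ, C_mul]
    linear_combination e

/-- Pseudo-division with an even power of the leading coefficient, which does not affect signs. -/
theorem exists_pseudo_div_even {B : Type*} [CommRing B] (q : B[X]) (j : ℕ)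
    (hq : ∀ i, j < i → q.coeff i = 0) (p : B[X]) :
      ∃ (m : ℕ) (s r : B[X]), C ((q.coeff j ^ m) ^ 2) * p = q * s + r ∧ r.degree < j := by
  obtain ⟨m, s, r, e, hr⟩ := exists_pseudo_div q j hq (p.natDegree + 1) p
    (p.degree_le_natDegree.trans_lt (by exact_mod_cast Nat.lt_succ_self _))
  refine ⟨m, C (q.coeff j ^ m) * s, C (q.coeff j ^ m) * r, ?_, ?_⟩
  · rw [pow_two, C_mul]; linear_combination C (q.coeff j ^ m) * e
  · rw [degree_lt_iff_coeff_zero] at hr ⊢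
    intro i hi
    rw [coeff_C_mul, hr i hi, mul_zero]

/-- The part of `q` of degree at most `j`. -/
def lowPart {B : Type*} [CommRing B] (j : ℕ) (q : B[X]) : B[X] :=
  ∑ i ∈ Finset.range (j + 1), monomial i (q.coeff i)

theorem coeff_lowPart {B : Type*} [CommRing B] (j : ℕ) (q : B[X]) (i : ℕ) :
    (lowPart j q).coeff i = if i ≤ j then q.coeff i else 0 := by
  simp [lowPart, coeff_monomial]

set_option linter.unusedSectionVars false

variable (R₁ R₂ : Type*) [Field R₁] [LinearOrder R₁] [IsStrictOrderedRing R₁]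
  [Field R₂] [LinearOrder R₂] [IsStrictOrderedRing R₂] {B : Type*} [CommRing B]

/-- The signs of finitely many coefficient expressions determine the sign patterns that `Q` realizes:
any two specializations agreeing in sign on those expressions are matched, in both directions. -/
def Controlled (Q : Finset B[X]) : Prop :=
  ∃ Q' : Finset B, ∀ (φ₁ : B →+* R₁) (φ₂ : B →+* R₂),
    (∀ b ∈ Q', SignType.sign (φ₁ b) = SignType.sign (φ₂ b)) →
      SignMatch Q φ₁ φ₂ ∧ SignMatch Q φ₂ φ₁

variable {R₁ R₂}

theorem exists_strictMonoOn (A : Finset R₁) : ∃ h : R₁ → R₂, StrictMonoOn h A := by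
  refine ⟨fun x => ((A.filter (· < x)).card : R₂), ?_⟩
  intro x hx y hy hxy
  simp only [Nat.cast_lt]
  apply Finset.card_lt_card
  rw [Finset.ssubset_iff_of_subset]
  · exact ⟨x, by simpa using ⟨hx, hxy⟩, by simp⟩
  · intro z hz
    simp only [Finset.mem_filter] at hz ⊢
    exact ⟨hz.1, hz.2.trans hxy⟩

/-- At a root of `q`, the polynomial `p` has the sign of its pseudo-remainder modulo `q`, where `j` is
the degree of `q` after specialization. -/
theorem sign_eq_of_pseudo_div {q p s r : B[X]} {j m : ℕ} (φ₁ : B →+* R₁)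
    (e : C ((q.coeff j ^ m) ^ 2) * p = lowPart j q * s + r) (h0 : φ₁ (q.coeff j) ≠ 0)
    (hj : ∀ i, j < i → φ₁ (q.coeff i) = 0) {x : R₁} (hx : (q.map φ₁).eval x = 0) :
    SignType.sign ((p.map φ₁).eval x) = SignType.sign ((r.map φ₁).eval x) := by
  have hq : (lowPart j q).map φ₁ = q.map φ₁ := by
    ext i
    rw [coeff_map, coeff_map, coeff_lowPart]
    split_ifs with h
    · rfl
    · rw [map_zero, hj i (not_le.1 h)]
  have := congrArg (fun P => (P.map φ₁).eval x) e
  simp only [Polynomial.map_mul, Polynomial.map_add, hq, eval_mul, eval_add, hx, map_C, eval_C,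
    zero_mul, zero_add] at this
  have hpos : 0 < φ₁ ((q.coeff j ^ m) ^ 2) := by
    rw [map_pow, map_pow]; positivity
  rw [← this, sign_mul, sign_pos hpos, one_mul]

theorem map_erase_of_coeff {R : Type*} [Field R] (φ : B →+* R) {p : B[X]} {d : ℕ}
    (h : φ (p.coeff d) = 0) : (p.erase d).map φ = p.map φ := by
  ext i
  rw [coeff_map, coeff_map, coeff_erase]
  split_ifs with hi
  · rw [hi, h, map_zero]
  · rfl

open Classical in
/-- The sign conditions for `insert p Q₀` are controlled once those for `Q₀` together with any finite
family of smaller degree are: if the coefficient of degree `d` specializes to zero, `p` may be replaced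
by its truncation, and otherwise `SignMatch.step` applies with the pseudo-remainders of `p`
modulo the members of `Q₀`. -/
theorem controlled_insert (h₁ : PolyIVT R₁) (h₂ : PolyIVT R₂) (d : ℕ) (p : B[X])
    (hp : p.degree < (d + 1 : ℕ)) (Q₀ : Finset B[X]) (hd : derivative p ∈ Q₀)
    (hQ₀ : ∀ q ∈ Q₀, q.degree < (d + 1 : ℕ))
    (hlow : ∀ Q : Finset B[X], (∀ q ∈ Q, q.degree < d) → Controlled R₁ R₂ (Q ∪ Q₀)) :
    Controlled R₁ R₂ (insert p Q₀) := by
  have hdiv : ∀ (q : B[X]) (j : ℕ), ∃ r : B[X], r.degree < j ∧ ∃ (m : ℕ) (s : B[X]),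
      C ((q.coeff j ^ m) ^ 2) * p = lowPart j q * s + r := by
    intro q j
    obtain ⟨m, s, r, e, hr⟩ := exists_pseudo_div_even (lowPart j q) j
      (fun i hi => by rw [coeff_lowPart, if_neg (not_le.2 hi)]) p
    rw [coeff_lowPart, if_pos le_rfl] at e
    exact ⟨r, hr, m, s, e⟩
  choose r hr hdiv using hdiv
  obtain ⟨Qa, ha⟩ := hlow {p.erase d} (by
    intro q hq
    rw [Finset.mem_singleton.1 hq]
    rw [degree_lt_iff_coeff_zero] at hp ⊢
    intro i hi
    rcases Nat.lt_or_ge d i with h | h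
    · rw [coeff_erase, if_neg (by omega), hp i h]
    · obtain rfl : i = d := by omega
      rw [coeff_erase, if_pos rfl])
  set Rem : Finset B[X] := Q₀.biUnion fun q => (Finset.range (d + 1)).image (r q) with hRem
  obtain ⟨Qb, hb⟩ := hlow Rem (by
    intro q hq
    simp only [hRem, Finset.mem_biUnion, Finset.mem_image, Finset.mem_range] at hq
    obtain ⟨q, -, j, hj, rfl⟩ := hq
    exact (hr q j).trans_le (by exact_mod_cast Nat.lt_succ_iff.1 hj))
  set Co : Finset B := (insert p Q₀).biUnion fun q => (Finset.range (d + 1)).image q.coeff with hCo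
  refine ⟨Qa ∪ Qb ∪ Co, ?_⟩
  intro φ₁ φ₂ hφ
  have hco : ∀ q ∈ insert p Q₀, ∀ i, SignType.sign (φ₁ (q.coeff i)) =
      SignType.sign (φ₂ (q.coeff i)) := by
    intro q hq i
    rcases Nat.lt_or_ge i (d + 1) with hi | hi
    · refine hφ _ (Finset.mem_union_right _ ?_)
      simp only [hCo, Finset.mem_biUnion, Finset.mem_image, Finset.mem_range]
      exact ⟨q, hq, i, hi, rfl⟩
    · have : q.degree < (d + 1 : ℕ) := by
        rcases Finset.mem_insert.1 hq with rfl | hq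
        · exact hp
        · exact hQ₀ q hq
      rw [degree_lt_iff_coeff_zero] at this
      rw [this i hi, RingHom.map_zero, RingHom.map_zero, sign_zero, sign_zero]
  have hco0 : ∀ q ∈ insert p Q₀, ∀ i, φ₁ (q.coeff i) = 0 ↔ φ₂ (q.coeff i) = 0 := by
    intro q hq i
    rw [← sign_eq_zero_iff, hco q hq i, sign_eq_zero_iff]
  have hpm := Finset.mem_insert_self p Q₀
  have hpt := (degree_lt_iff_coeff_zero _ _).1 hp
  by_cases hpd : φ₁ (p.coeff d) = 0
  · obtain ⟨m1, m2⟩ := ha φ₁ φ₂ fun b hb => hφ b (by simp [hb])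
    have t1 := map_erase_of_coeff φ₁ hpd
    have t2 := map_erase_of_coeff φ₂ ((hco0 p hpm d).1 hpd)
    constructor
    · intro A
      obtain ⟨h, hm, hs⟩ := m1 A
      refine ⟨h, hm, fun x hx q hq => ?_⟩
      rcases Finset.mem_insert.1 hq with rfl | hq
      · rw [← t1, ← t2]; exact hs x hx _ (by simp)
      · exact hs x hx q (by simp [hq])
    · intro A
      obtain ⟨h, hm, hs⟩ := m2 A
      refine ⟨h, hm, fun x hx q hq => ?_⟩
      rcases Finset.mem_insert.1 hq with rfl | hq
      · rw [← t1, ← t2]; exact hs x hx _ (by simp)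
      · exact hs x hx q (by simp [hq])
  · obtain ⟨m1, m2⟩ := hb φ₁ φ₂ fun b hb => hφ b (by simp [hb])
    have hpd' : φ₂ (p.coeff d) ≠ 0 := fun h => hpd ((hco0 p hpm d).2 h)
    have hple : p.natDegree ≤ d := natDegree_le_iff_coeff_eq_zero.2 fun i hi => hpt i hi
    have n1 : (p.map φ₁).natDegree = d :=
      le_antisymm (natDegree_map_le.trans hple) (le_natDegree_of_ne_zero (by rwa [coeff_map]))
    have n2 : (p.map φ₂).natDegree = d :=
      le_antisymm (natDegree_map_le.trans hple) (le_natDegree_of_ne_zero (by rwa [coeff_map]))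
    have hz : ∀ q ∈ Q₀, q.map φ₁ = 0 ↔ q.map φ₂ = 0 := by
      intro q hq
      simp only [Polynomial.ext_iff, coeff_map, coeff_zero,
        hco0 q (Finset.mem_insert_of_mem hq)]
    have hlc : SignType.sign (p.map φ₁).leadingCoeff = SignType.sign (p.map φ₂).leadingCoeff := by
      rw [leadingCoeff, leadingCoeff, n1, n2, coeff_map, coeff_map, hco p hpm]
    have hs : ∀ q ∈ Q₀, q.map φ₁ ≠ 0 → ∀ x y, (q.map φ₁).eval x = 0 → (q.map φ₂).eval y = 0 →
        (∀ r ∈ Rem ∪ Q₀, SignType.sign ((r.map φ₁).eval x) = SignType.sign ((r.map φ₂).eval y)) →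
        SignType.sign ((p.map φ₁).eval x) = SignType.sign ((p.map φ₂).eval y) := by
      intro q hq hq0 x y hx hy hxy
      set j := (q.map φ₁).natDegree with hj
      have hjc : φ₁ (q.coeff j) ≠ 0 := by
        rw [← coeff_map]; exact leadingCoeff_ne_zero.2 hq0
      have hjt : ∀ i, j < i → φ₁ (q.coeff i) = 0 := fun i hi => by
        rw [← coeff_map]; exact coeff_eq_zero_of_natDegree_lt hi
      have hq' := (Finset.mem_insert_of_mem hq : q ∈ insert p Q₀)
      obtain ⟨m, s, e⟩ := hdiv q j
      rw [sign_eq_of_pseudo_div φ₁ e hjc hjt hx,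
        sign_eq_of_pseudo_div φ₂ e (fun h => hjc ((hco0 q hq' j).2 h))
          (fun i hi => (hco0 q hq' i).1 (hjt i hi)) hy]
      apply hxy
      refine Finset.mem_union_left _ ?_
      simp only [hRem, Finset.mem_biUnion, Finset.mem_image, Finset.mem_range]
      refine ⟨q, hq, j, ?_, rfl⟩
      by_contra hlt
      apply hjc
      rw [(degree_lt_iff_coeff_zero _ _).1 (hQ₀ q hq) j (not_lt.1 hlt), map_zero]
    have hp0 : p.map φ₁ ≠ 0 := fun h => hpd (by rw [← coeff_map, h, coeff_zero])
    have hp0' : p.map φ₂ ≠ 0 := fun h => hpd' (by rw [← coeff_map, h, coeff_zero])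
    constructor
    · exact SignMatch.step h₁ h₂ Finset.subset_union_right p hd m1 m2 hz hp0 (n1.trans n2.symm)
        hlc hs
    · exact SignMatch.step h₂ h₁ Finset.subset_union_right p hd m2 m1 (fun q hq => (hz q hq).symm)
        hp0' (n2.trans n1.symm) hlc.symm fun q hq hq0 y x hy hx hxy =>
          (hs q hq (fun h => hq0 ((hz q hq).1 h)) x y hx hy fun r hr => (hxy r hr).symm).symm

theorem Controlled.mono {Q Q' : Finset B[X]} (h : Controlled R₁ R₂ Q) (hQ : Q' ⊆ Q) :
    Controlled R₁ R₂ Q' := by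
  obtain ⟨S, hS⟩ := h
  exact ⟨S, fun φ₁ φ₂ hφ => ⟨(hS φ₁ φ₂ hφ).1.mono hQ, (hS φ₁ φ₂ hφ).2.mono hQ⟩⟩

open Classical in
/-- Induction on the degree bound, and for a fixed bound on the number of polynomials of top degree.
The statement proved for the latter allows arbitrary further polynomials of smaller degree. -/
theorem controlled_of_degree_lt (h₁ : PolyIVT R₁) (h₂ : PolyIVT R₂) (d : ℕ) :
    ∀ Q : Finset B[X], (∀ q ∈ Q, q.degree < d) → Controlled R₁ R₂ Q := by
  induction d with
  | zero =>
    intro Q hQ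
    have h0 : ∀ q ∈ Q, q = 0 := fun q hq => by simpa using hQ q hq
    refine ⟨∅, fun φ₁ φ₂ _ => ⟨fun A => ?_, fun A => ?_⟩⟩
    · obtain ⟨h, hh⟩ := exists_strictMonoOn (R₂ := R₂) A
      exact ⟨h, hh, fun x _ q hq => by simp [h0 q hq]⟩
    · obtain ⟨h, hh⟩ := exists_strictMonoOn (R₂ := R₁) A
      exact ⟨h, hh, fun x _ q hq => by simp [h0 q hq]⟩
  | succ d ih =>
    have key : ∀ T : Finset B[X], (∀ q ∈ T, q.degree < (d + 1 : ℕ)) →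
        ∀ Q : Finset B[X], (∀ q ∈ Q, q.degree < d) → Controlled R₁ R₂ (Q ∪ T) := by
      intro T
      induction T using Finset.induction_on with
      | empty => intro _ Q hQ; simpa using ih Q hQ
      | insert p T _ ihT =>
        intro hT Q hQ
        have hp := hT p (Finset.mem_insert_self _ _)
        have hT' : ∀ q ∈ T, q.degree < (d + 1 : ℕ) := fun q hq => hT q (Finset.mem_insert_of_mem hq)
        have hd' : (derivative p).degree < d := by
          rw [degree_lt_iff_coeff_zero] at hp ⊢
          intro i hi
          rw [coeff_derivative, hp _ (by omega), zero_mul]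
        have hlt : ∀ {q : B[X]}, q.degree < d → q.degree < (d + 1 : ℕ) := fun h =>
          h.trans (by exact_mod_cast Nat.lt_succ_self d)
        refine (controlled_insert h₁ h₂ d p hp (insert (derivative p) Q ∪ T) (by simp) ?_ ?_).mono ?_
        · intro q hq
          rcases Finset.mem_union.1 hq with hq | hq
          · rcases Finset.mem_insert.1 hq with rfl | hq
            · exact hlt hd'
            · exact hlt (hQ q hq)
          · exact hT' q hq
        · intro Q₂ hQ₂
          rw [← Finset.union_assoc]
          refine ihT hT' _ fun q hq => ?_
          rcases Finset.mem_union.1 hq with hq | hq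
          · exact hQ₂ q hq
          · rcases Finset.mem_insert.1 hq with rfl | hq
            · exact hd'
            · exact hQ q hq
        · intro q
          simp only [Finset.mem_union, Finset.mem_insert]
          tauto
    intro Q hQ
    simpa using key Q hQ ∅ (by simp)

/-- One-variable quantifier elimination, in a form that compares two ordered fields: the realizable
sign patterns of a finite family of polynomials are determined by the signs of finitely many elements
of the coefficient ring. -/
theorem controlled (h₁ : PolyIVT R₁) (h₂ : PolyIVT R₂) (Q : Finset B[X]) : Controlled R₁ R₂ Q := by
  refine controlled_of_degree_lt h₁ h₂ (Q.sup natDegree + 1) Q fun q hq => ?_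
  refine q.degree_le_natDegree.trans_lt ?_
  exact_mod_cast Nat.lt_succ_of_le (Finset.le_sup hq)

end Polynomial

/-! ### Real points from points over larger fields -/

/-- Positive reals are squares, so a homomorphism out of `ℝ` preserves signs. -/
theorem sign_map_real {R : Type*} [Field R] [LinearOrder R] [IsStrictOrderedRing R] (ι : ℝ →+* R)
    (c : ℝ) : SignType.sign (ι c) = SignType.sign c := by
  have hpos : ∀ c : ℝ, 0 < c → 0 < ι c := by
    intro c hc
    have h : ι c = ι (Real.sqrt c) * ι (Real.sqrt c) := by
      rw [← map_mul, Real.mul_self_sqrt hc.le]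
    exact lt_of_le_of_ne (h ▸ mul_self_nonneg _) fun h0 => hc.ne' (by
      simpa using h0.symm)
  rcases lt_trichotomy c 0 with h | rfl | h
  · have := hpos (-c) (by linarith)
    rw [map_neg] at this
    rw [sign_neg h, sign_neg (by linarith)]
  · simp
  · rw [sign_pos h, sign_pos (hpos c h)]

theorem eval₂Hom_cons_eq {R : Type*} [Field R] (ι : ℝ →+* R) {n : ℕ} (y : R) (s : Fin n → R)
    (f : MvPolynomial (Fin (n + 1)) ℝ) :
    eval₂Hom ι (Fin.cons y s : Fin (n + 1) → R) f =
      Polynomial.eval y (Polynomial.map (eval₂Hom ι s) (finSuccEquiv ℝ n f)) := by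
  induction f using MvPolynomial.induction_on with
  | C a => simp [finSuccEquiv_apply]
  | add p q hp hq => rw [map_add, map_add, Polynomial.map_add, Polynomial.eval_add, hp, hq]
  | mul_X p i hp =>
    rw [map_mul, map_mul, Polynomial.map_mul, Polynomial.eval_mul, hp]
    congr 1
    refine Fin.cases ?_ (fun j => ?_) i
    · simp [finSuccEquiv_apply]
    · simp [finSuccEquiv_apply]

open Classical in
/-- The Artin–Lang transfer: sign conditions with real coefficients which have a solution over an
ordered field with the polynomial intermediate value property have a real solution. -/
theorem exists_real_point {R : Type*} [Field R] [LinearOrder R] [IsStrictOrderedRing R]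
    (hR : Polynomial.PolyIVT R) (ι : ℝ →+* R) :
    ∀ {n : ℕ} (Q : Finset (MvPolynomial (Fin n) ℝ)) (x : Fin n → R), ∃ x' : Fin n → ℝ,
      ∀ q ∈ Q, SignType.sign (eval₂Hom ι x q) = SignType.sign (eval x' q) := by
  intro n
  induction n with
  | zero =>
    intro Q x
    refine ⟨Fin.elim0, fun q _ => ?_⟩
    obtain ⟨c, rfl⟩ := C_surjective (Fin 0) q
    simpa using sign_map_real ι c
  | succ n ih =>
    intro Q x
    obtain ⟨Q', hQ'⟩ := Polynomial.controlled hR Polynomial.polyIVT_real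
      (Q.image (finSuccEquiv ℝ n))
    obtain ⟨t, ht⟩ := ih Q' (Fin.tail x)
    obtain ⟨h, -, hs⟩ := (hQ' (eval₂Hom ι (Fin.tail x)) (eval t) ht).1 {x 0}
    refine ⟨Fin.cons (h (x 0)) t, fun q hq => ?_⟩
    have := hs (x 0) (by simp) (finSuccEquiv ℝ n q) (Finset.mem_image_of_mem _ hq)
    rw [← eval₂Hom_cons_eq, Fin.cons_self_tail, ← eval_eq_eval_mv_eval'] at this
    exact this

/-! ### Orderings of fields and sign changes of polynomials -/

open Classical in
/-- A preordering `P` of a field with `P ∪ -P` everything is the positive cone of an ordering. -/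
theorem exists_order_of_cone {K : Type*} [Field K] (P : Subsemiring K) (hsq : ∀ x, x * x ∈ P)
    (h1 : (-1 : K) ∉ P) (htot : ∀ x, x ∈ P ∨ -x ∈ P) :
    ∃ (_ : LinearOrder K) (_ : IsStrictOrderedRing K), ∀ x : K, 0 ≤ x ↔ x ∈ P := by
  let C : RingCone K :=
    { P with
      eq_zero_of_mem_of_neg_mem' := by
        intro a ha hna
        by_contra h0
        apply h1
        have : (-1 : K) = a * (-a) * (a⁻¹ * a⁻¹) := by field_simp
        rw [this]
        exact P.mul_mem (P.mul_mem ha hna) (hsq _) }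
  have : HasMemOrNegMem C := ⟨htot⟩
  let _ : LinearOrder K := LinearOrder.mkOfAddGroupCone C
  have : IsOrderedRing K := IsOrderedRing.mkOfCone C
  refine ⟨inferInstance, IsOrderedRing.toIsStrictOrderedRing K, fun x => ?_⟩
  change x - 0 ∈ P ↔ x ∈ P
  rw [sub_zero]

namespace Polynomial

theorem eval_nonneg_of_mem {K : Type*} [Field K] [LinearOrder K] [IsStrictOrderedRing K] {G : K[X]}
    (hG : G ∈ AddSubmonoid.closure {G : K[X] | ∃ t : K, 0 ≤ t ∧ ∃ q : K[X], G = C t * q ^ 2})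
    (a : K) : 0 ≤ G.eval a := by
  induction hG using AddSubmonoid.closure_induction with
  | mem x hx =>
    obtain ⟨t, ht, q, rfl⟩ := hx
    simp only [eval_mul, eval_C, eval_pow]
    positivity
  | zero => simp
  | add x y _ _ hx hy => rw [eval_add]; exact add_nonneg hx hy

/-- Modulo `f`, a sum of squares with nonnegative weights may be replaced by one of degree at most
`2 (deg f - 1)`. -/
theorem exists_reduced {K : Type*} [Field K] [LinearOrder K] [IsStrictOrderedRing K] {f G : K[X]}
    (hf : f.natDegree ≠ 0)
    (hG : G ∈ AddSubmonoid.closure {G : K[X] | ∃ t : K, 0 ≤ t ∧ ∃ q : K[X], G = C t * q ^ 2}) :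
    ∃ G' ∈ AddSubmonoid.closure {G : K[X] | ∃ t : K, 0 ≤ t ∧ ∃ q : K[X], G = C t * q ^ 2},
      f ∣ G - G' ∧ G'.natDegree ≤ 2 * (f.natDegree - 1) := by
  induction hG using AddSubmonoid.closure_induction with
  | mem x hx =>
    obtain ⟨t, ht, q, rfl⟩ := hx
    refine ⟨C t * (q % f) ^ 2, AddSubmonoid.subset_closure ⟨t, ht, _, rfl⟩, ?_, ?_⟩
    · have h := EuclideanDomain.div_add_mod q f
      refine ⟨C t * (q / f) * (q + q % f), ?_⟩
      linear_combination (- C t * (q + q % f)) * h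
    · refine (natDegree_C_mul_le _ _).trans (natDegree_pow_le.trans ?_)
      have := natDegree_mod_lt q hf
      omega
  | zero => exact ⟨0, zero_mem _, by simp, by simp⟩
  | add x y _ _ hx hy =>
    obtain ⟨x', hx', dx, nx⟩ := hx
    obtain ⟨y', hy', dy, ny⟩ := hy
    refine ⟨x' + y', add_mem hx' hy', ?_, (natDegree_add_le _ _).trans (max_le nx ny)⟩
    rw [add_sub_add_comm]
    exact dvd_add dx dy

/-- A polynomial that changes sign between `a` and `b` divides no `1 + G` with `G` a weighted sum of
squares. After reducing `G`, the cofactor has smaller degree and changes sign as well, which allows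
descent on the degree. -/
theorem not_dvd_one_add {K : Type*} [Field K] [LinearOrder K] [IsStrictOrderedRing K] {a b : K}
    (d : ℕ) : ∀ f : K[X], f.natDegree = d → f.eval a * f.eval b < 0 →
    ∀ G ∈ AddSubmonoid.closure {G : K[X] | ∃ t : K, 0 ≤ t ∧ ∃ q : K[X], G = C t * q ^ 2},
      ¬ f ∣ 1 + G := by
  induction d using Nat.strong_induction_on with
  | _ d ih =>
  intro f hfd hf G hG hdvd
  by_cases hd : f.natDegree = 0
  · rw [eq_C_of_natDegree_eq_zero hd, eval_C, eval_C] at hf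
    exact absurd (mul_self_nonneg (f.coeff 0)) (not_le.2 hf)
  obtain ⟨G', hG', hdv, hdeg⟩ := exists_reduced hd hG
  have hdvd' : f ∣ 1 + G' := by
    have := dvd_sub hdvd hdv
    rwa [show 1 + G - (G - G') = 1 + G' by ring] at this
  obtain ⟨g, hg⟩ := hdvd'
  have hpos : ∀ x, 0 < f.eval x * g.eval x := by
    intro x
    rw [← eval_mul, ← hg, eval_add, eval_one]
    linarith [eval_nonneg_of_mem hG' x]
  have hg0 : g ≠ 0 := by
    rintro rfl
    simpa using hpos a
  have hf0 : f ≠ 0 := by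
    rintro rfl
    simpa using hpos a
  have hn : f.natDegree + g.natDegree ≤ 2 * (f.natDegree - 1) := by
    rw [← natDegree_mul hf0 hg0, ← hg]
    exact (natDegree_add_le _ _).trans (by simpa using hdeg)
  refine ih g.natDegree (by omega) g rfl ?_ G' hG' ⟨f, by rw [hg, mul_comm]⟩
  by_contra hnn
  have h1 := mul_pos (hpos a) (hpos b)
  have h2 : f.eval a * g.eval a * (f.eval b * g.eval b) =
      (f.eval a * f.eval b) * (g.eval a * g.eval b) := by ring
  rw [h2] at h1
  exact absurd h1 (not_lt.2 (mul_nonpos_of_nonpos_of_nonneg hf.le (not_lt.1 hnn)))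

theorem exists_irreducible_factor {K : Type*} [Field K] [LinearOrder K] [IsStrictOrderedRing K]
    {a b : K} (p : K[X]) (hp : p.eval a * p.eval b < 0) :
    ∃ f : K[X], Irreducible f ∧ f ∣ p ∧ f.eval a * f.eval b < 0 := by
  induction p using WfDvdMonoid.induction_on_irreducible with
  | zero => simp at hp
  | unit u hu =>
    rw [isUnit_iff] at hu
    obtain ⟨r, -, rfl⟩ := hu
    rw [eval_C, eval_C] at hp
    exact absurd (mul_self_nonneg r) (not_le.2 hp)
  | mul q i hq hi ih =>
    by_cases h : i.eval a * i.eval b < 0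
    · exact ⟨i, hi, dvd_mul_right _ _, h⟩
    · obtain ⟨f, hf, hfq, hf'⟩ := ih (by
        by_contra hn
        have : (i * q).eval a * (i * q).eval b =
          (i.eval a * i.eval b) * (q.eval a * q.eval b) := by simp only [eval_mul]; ring
        rw [this] at hp
        exact absurd hp (not_lt.2 (mul_nonneg (not_lt.1 h) (not_lt.1 hn))))
      exact ⟨f, hf, hfq.mul_left _, hf'⟩

/-- An ordered field has the polynomial intermediate value property if `-1` is a weighted sum of
squares in `K(α)` for every `α` outside `K` in an algebraically closed extension. -/
theorem polyIVT_of_extension {K Ω : Type*} [Field K] [LinearOrder K] [IsStrictOrderedRing K]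
    [Field Ω] [IsAlgClosed Ω] [Algebra K Ω]
    (H : ∀ α : Ω, (∃ x : K, algebraMap K Ω x = α) ∨ ∃ G ∈ AddSubmonoid.closure
      {G : K[X] | ∃ t : K, 0 ≤ t ∧ ∃ q : K[X], G = C t * q ^ 2}, aeval α G = -1) : PolyIVT K := by
  intro p a b hab hp
  obtain ⟨f, hf, hfp, hfab⟩ := exists_irreducible_factor p hp
  obtain ⟨α, hα⟩ := IsAlgClosed.exists_aeval_eq_zero Ω f hf.degree_pos.ne'
  rcases H α with ⟨x, rfl⟩ | ⟨G, hG, hGα⟩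
  · rw [aeval_algebraMap_apply, ← (algebraMap K Ω).map_zero] at hα
    have hx : f.eval x = 0 := by
      have := (algebraMap K Ω).injective hα
      simpa [aeval_def] using this
    obtain ⟨g, hg⟩ := dvd_iff_isRoot.2 hx
    have hu : IsUnit g := (hf.isUnit_or_isUnit hg).resolve_left (not_isUnit_X_sub_C x)
    obtain ⟨c, -, rfl⟩ := isUnit_iff.1 hu
    have h2 : f.eval a * f.eval b = ((a - x) * (b - x)) * (c * c) := by
      rw [hg]; simp; ring
    rw [h2] at hfab
    have h3 : (a - x) * (b - x) < 0 := by
      by_contra h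
      exact absurd hfab (not_lt.2 (mul_nonneg (not_lt.1 h) (mul_self_nonneg c)))
    refine ⟨x, ?_, ?_, ?_⟩
    · by_contra h
      nlinarith [mul_nonneg (sub_nonneg.2 (not_lt.1 h)) (sub_nonneg.2 ((not_lt.1 h).trans hab.le))]
    · by_contra h
      nlinarith [mul_nonneg (sub_nonneg.2 (not_lt.1 h)) (sub_nonneg.2 (hab.le.trans (not_lt.1 h)))]
    · obtain ⟨r, rfl⟩ := hfp
      rw [eval_mul, hx, zero_mul]
  · exfalso
    refine not_dvd_one_add _ f rfl hfab G hG ?_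
    have hα_int : IsIntegral K α := (show IsAlgebraic K α from ⟨f, hf.ne_zero, hα⟩).isIntegral
    have hfm : f ∣ minpoly K α :=
      (minpoly.irreducible hα_int).dvd_symm hf (minpoly.dvd K α hα)
    refine hfm.trans (minpoly.dvd K α ?_)
    rw [map_add, map_one, hGα]; ring

end Polynomial

/-! ### Homomorphisms from preordered rings to real closed fields -/

section extCone
variable {A Ω : Type*} [CommRing A] [Field Ω] (T : Subsemiring A) (φ : A →+* Ω)

/-- The cone of finite sums of elements `φ(t) h²` with `t ∈ T` and `h ∈ K`. -/
def extCone (K : Subfield Ω) : Subsemiring Ω :=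
  Submonoid.subsemiringClosure
    { carrier := {x | ∃ t ∈ T, ∃ h ∈ K, x = φ t * h ^ 2}
      one_mem' := ⟨1, T.one_mem, 1, K.one_mem, by simp⟩
      mul_mem' := by
        rintro _ _ ⟨t, ht, h, hh, rfl⟩ ⟨t', ht', h', hh', rfl⟩
        exact ⟨t * t', T.mul_mem ht ht', h * h', K.mul_mem hh hh', by rw [map_mul]; ring⟩ }

theorem mem_extCone {K : Subfield Ω} {x : Ω} : x ∈ extCone T φ K ↔
    x ∈ AddSubmonoid.closure {x | ∃ t ∈ T, ∃ h ∈ K, x = φ t * h ^ 2} := by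
  rw [extCone, Submonoid.subsemiringClosure_mem]; rfl

variable {T φ}

theorem extCone_of_mem {K : Subfield Ω} {t : A} (ht : t ∈ T) {h : Ω} (hh : h ∈ K) :
    φ t * h ^ 2 ∈ extCone T φ K :=
  (mem_extCone T φ).2 (AddSubmonoid.subset_closure ⟨t, ht, h, hh, rfl⟩)

theorem extCone_map_mem {K : Subfield Ω} {t : A} (ht : t ∈ T) : φ t ∈ extCone T φ K := by
  simpa using extCone_of_mem (φ := φ) ht K.one_mem

theorem extCone_sq_mem {K : Subfield Ω} {h : Ω} (hh : h ∈ K) : h ^ 2 ∈ extCone T φ K := by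
  simpa using extCone_of_mem (φ := φ) T.one_mem hh

theorem extCone_le {K : Subfield Ω} (hK : ∀ a, φ a ∈ K) {x : Ω} (hx : x ∈ extCone T φ K) :
    x ∈ K := by
  rw [mem_extCone] at hx
  induction hx using AddSubmonoid.closure_induction with
  | mem x hx =>
    obtain ⟨t, -, h, hh, rfl⟩ := hx
    exact K.mul_mem (hK t) (K.pow_mem hh 2)
  | zero => exact K.zero_mem
  | add x y _ _ hx hy => exact K.add_mem hx hy

variable (T φ) in
/-- Zorn: a largest subfield over which `T` remains a proper cone. -/
theorem exists_maximal_subfield (K₀ : Subfield Ω) (h₀ : (-1 : Ω) ∉ extCone T φ K₀) :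
    ∃ K : Subfield Ω, K₀ ≤ K ∧ Maximal (fun K => (-1 : Ω) ∉ extCone T φ K) K := by
  refine zorn_le_nonempty₀ {K | (-1 : Ω) ∉ extCone T φ K} ?_ K₀ h₀
  intro c hc hchain y hy
  refine ⟨sSup c, ?_, fun z hz => le_sSup hz⟩
  intro hmem
  have hne : c.Nonempty := ⟨y, hy⟩
  have hdir := hchain.directedOn
  have key : ∀ x ∈ extCone T φ (sSup c), ∃ K ∈ c, x ∈ extCone T φ K := by
    intro x hx
    rw [mem_extCone] at hx
    induction hx using AddSubmonoid.closure_induction with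
    | mem x hx =>
      obtain ⟨t, ht, h, hh, rfl⟩ := hx
      obtain ⟨K, hK, hhK⟩ := (Subfield.mem_sSup_of_directedOn hne hdir).1 hh
      exact ⟨K, hK, extCone_of_mem ht hhK⟩
    | zero => exact ⟨y, hy, zero_mem _⟩
    | add u v _ _ hu hv =>
      obtain ⟨K, hK, hu⟩ := hu
      obtain ⟨K', hK', hv⟩ := hv
      obtain ⟨L, hL, h1, h2⟩ := hdir K hK K' hK'
      have mono : ∀ {K K' : Subfield Ω}, K ≤ K' → ∀ {x}, x ∈ extCone T φ K →
          x ∈ extCone T φ K' := by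
        intro K K' h x hx
        rw [mem_extCone] at hx ⊢
        refine AddSubmonoid.closure_mono ?_ hx
        rintro _ ⟨t, ht, g, hg, rfl⟩
        exact ⟨t, ht, g, h hg, rfl⟩
      exact ⟨L, hL, add_mem (mono h1 hu) (mono h2 hv)⟩
  obtain ⟨K, hK, h⟩ := key _ hmem
  exact hc hK h

/-- By maximality of `K`, adjoining an algebraic `α ∉ K` makes `-1` a `T`-weighted sum of squares;
elements of `K(α)` are polynomials in `α`. -/
theorem mem_or_of_maximal {K : Subfield Ω}
    (hmax : Maximal (fun K => (-1 : Ω) ∉ extCone T φ K) K) {α : Ω} (hα : IsAlgebraic K α) :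
    α ∈ K ∨ (-1 : Ω) ∈ AddSubmonoid.closure
      {x | ∃ t ∈ T, ∃ q : Polynomial K, x = φ t * (Polynomial.aeval α q) ^ 2} := by
  rw [or_iff_not_imp_right]
  intro hn
  set L : Subfield Ω := (IntermediateField.adjoin K {α}).toSubfield with hL
  have hKL : K ≤ L := fun x hx => (IntermediateField.adjoin K {α}).algebraMap_mem ⟨x, hx⟩
  have hαL : α ∈ L := IntermediateField.mem_adjoin_simple_self K α
  have : (-1 : Ω) ∉ extCone T φ L := by
    intro h
    apply hn
    rw [mem_extCone] at h
    refine AddSubmonoid.closure_mono ?_ h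
    rintro _ ⟨t, ht, g, hg, rfl⟩
    have hg' : g ∈ (IntermediateField.adjoin K {α}).toSubalgebra := hg
    rw [IntermediateField.adjoin_simple_toSubalgebra_of_isAlgebraic hα,
      Algebra.adjoin_singleton_eq_range_aeval] at hg'
    obtain ⟨q, rfl⟩ := hg'
    exact ⟨t, ht, q, rfl⟩
  exact hmax.le_of_ge this hKL hαL

/-- On a maximal subfield the cone is an ordering: apply `mem_or_of_maximal` to a square root `r` of
`a`, and compare the parts of a representation of `-1` without and with `r`. -/
theorem mem_or_neg_mem_of_maximal [IsAlgClosed Ω] {K : Subfield Ω} (hK : ∀ a, φ a ∈ K)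
    (hmax : Maximal (fun K => (-1 : Ω) ∉ extCone T φ K) K) {a : Ω} (ha : a ∈ K) :
    a ∈ extCone T φ K ∨ -a ∈ extCone T φ K := by
  obtain ⟨r, hr⟩ := IsAlgClosed.exists_pow_nat_eq a (n := 2) two_pos
  by_cases hrK : r ∈ K
  · left
    rw [← hr]
    exact extCone_sq_mem hrK
  right
  have hra : Polynomial.aeval r (Polynomial.X ^ 2 - Polynomial.C (⟨a, ha⟩ : K)) = 0 := by
    rw [map_sub, map_pow, Polynomial.aeval_X, Polynomial.aeval_C, hr]
    exact sub_self a
  have hmon : (Polynomial.X ^ 2 - Polynomial.C (⟨a, ha⟩ : K)).Monic :=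
    Polynomial.monic_X_pow_sub_C _ two_ne_zero
  have halg : IsAlgebraic K r := ⟨_, hmon.ne_zero, hra⟩
  have hq : ∀ q : Polynomial K, ∃ u ∈ K, ∃ v ∈ K, Polynomial.aeval r q = u + v * r := by
    intro q
    induction q using Polynomial.induction_on' with
    | add p q hp hq =>
      obtain ⟨u, hu, v, hv, e⟩ := hp
      obtain ⟨u', hu', v', hv', e'⟩ := hq
      exact ⟨u + u', add_mem hu hu', v + v', add_mem hv hv', by rw [map_add, e, e']; ring⟩
    | monomial n c =>
      have hm : Polynomial.aeval r (Polynomial.monomial n c) = (c : Ω) * r ^ n := by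
        rw [Polynomial.aeval_monomial]; rfl
      rw [hm]
      rcases Nat.even_or_odd' n with ⟨k, rfl | rfl⟩
      · exact ⟨c * a ^ k, mul_mem c.2 (pow_mem ha k), 0, K.zero_mem, by
          rw [pow_mul, hr]; ring⟩
      · exact ⟨0, K.zero_mem, c * a ^ k, mul_mem c.2 (pow_mem ha k), by
          rw [pow_succ, pow_mul, hr]; ring⟩
  have hform : ∀ x ∈ AddSubmonoid.closure
      {x | ∃ t ∈ T, ∃ q : Polynomial K, x = φ t * (Polynomial.aeval r q) ^ 2},
      ∃ s ∈ extCone T φ K, ∃ s' ∈ extCone T φ K, ∃ w ∈ K, x = s + a * s' + w * r := by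
    intro x hx
    induction hx using AddSubmonoid.closure_induction with
    | mem x hx =>
      obtain ⟨t, ht, q, rfl⟩ := hx
      obtain ⟨u, hu, v, hv, e⟩ := hq q
      refine ⟨_, extCone_of_mem ht hu, _, extCone_of_mem ht hv, 2 * φ t * u * v, ?_, ?_⟩
      · exact mul_mem (mul_mem (mul_mem (ofNat_mem K 2) (hK t)) hu) hv
      · rw [e, ← hr]; ring
    | zero => exact ⟨0, zero_mem _, 0, zero_mem _, 0, zero_mem _, by simp⟩
    | add x y _ _ hx hy =>
      obtain ⟨s, hs, s', hs', w, hw, rfl⟩ := hx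
      obtain ⟨z, hz, z', hz', w', hw', rfl⟩ := hy
      exact ⟨_, add_mem hs hz, _, add_mem hs' hz', _, add_mem hw hw', by ring⟩
  obtain ⟨s, hs, s', hs', w, hw, e⟩ :=
    hform _ ((mem_or_of_maximal hmax halg).resolve_left hrK)
  have hw0 : w = 0 := by
    by_contra hw0
    apply hrK
    have : r = (-1 - s - a * s') / w := by field_simp; linear_combination -e
    rw [this]
    exact div_mem (sub_mem (sub_mem (neg_mem (one_mem K)) (extCone_le hK hs))
      (mul_mem ha (extCone_le hK hs'))) hw
  rw [hw0, zero_mul, add_zero] at e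
  have hs0 : s' ≠ 0 := by
    rintro rfl
    rw [mul_zero, add_zero] at e
    exact hmax.prop (e ▸ hs)
  have : -a = (1 + s) * s' * (s'⁻¹) ^ 2 := by
    field_simp; linear_combination e
  rw [this]
  exact mul_mem (mul_mem (add_mem (one_mem _) hs) hs')
    (extCone_sq_mem (inv_mem (extCone_le hK hs')))

/-- A maximal subfield, ordered by its cone, is real closed in the sense of `PolyIVT`. -/
theorem exists_ordered_subfield [IsAlgClosed Ω] (K₀ : Subfield Ω) (hφ : ∀ a, φ a ∈ K₀)
    (halg : ∀ x : Ω, IsAlgebraic K₀ x) (h₀ : (-1 : Ω) ∉ extCone T φ K₀) :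
    ∃ (K : Subfield Ω) (_ : LinearOrder K) (_ : IsStrictOrderedRing K) (ψ : A →+* K),
      Polynomial.PolyIVT K ∧ ∀ t ∈ T, 0 ≤ ψ t := by
  obtain ⟨K, hK₀, hmax⟩ := exists_maximal_subfield T φ K₀ h₀
  have hK : ∀ a, φ a ∈ K := fun a => hK₀ (hφ a)
  obtain ⟨o, so, ho⟩ := exists_order_of_cone ((extCone T φ K).comap K.subtype)
    (fun x => by
      rw [Subsemiring.mem_comap, ← pow_two, map_pow]
      exact extCone_sq_mem x.2)
    (fun h => hmax.prop (by simpa using h))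
    (fun x => by simpa using mem_or_neg_mem_of_maximal hK hmax x.2)
  refine ⟨K, o, so, φ.codRestrict K hK, ?_, fun t ht => (ho _).2 (extCone_map_mem ht)⟩
  apply Polynomial.polyIVT_of_extension (Ω := Ω)
  intro α
  have hαK : IsAlgebraic K α := by
    obtain ⟨f, hf, hfα⟩ := halg α
    refine ⟨f.map (Subfield.inclusion hK₀), ?_, ?_⟩
    · exact (Polynomial.map_ne_zero_iff (Subfield.inclusion hK₀).injective).2 hf
    · rw [Polynomial.aeval_def, Polynomial.eval₂_map]
      exact hfα
  rcases mem_or_of_maximal hmax hαK with h | h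
  · exact .inl ⟨⟨α, h⟩, rfl⟩
  right
  have key : ∀ x ∈ AddSubmonoid.closure
      {x | ∃ t ∈ T, ∃ q : Polynomial K, x = φ t * (Polynomial.aeval α q) ^ 2},
      ∃ G ∈ AddSubmonoid.closure
        {G : K[X] | ∃ t : K, 0 ≤ t ∧ ∃ q : K[X], G = Polynomial.C t * q ^ 2},
        Polynomial.aeval α G = x := by
    intro x hx
    induction hx using AddSubmonoid.closure_induction with
    | mem x hx =>
      obtain ⟨t, ht, q, rfl⟩ := hx
      refine ⟨_, AddSubmonoid.subset_closure ⟨⟨φ t, hK t⟩, (ho _).2 (extCone_map_mem ht), q, rfl⟩,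
        ?_⟩
      rw [map_mul, map_pow, Polynomial.aeval_C]; rfl
    | zero => exact ⟨0, zero_mem _, by simp⟩
    | add x y _ _ hx hy =>
      obtain ⟨G, hG, rfl⟩ := hx
      obtain ⟨H, hH, rfl⟩ := hy
      exact ⟨G + H, add_mem hG hH, map_add _ _ _⟩
  exact key _ h

end extCone

/-- An ideal maximal among those disjoint from `1 + T` is prime and convex with respect to the
preordering `T`. -/
theorem exists_real_prime {A : Type*} [CommRing A] (T : Subsemiring A) (hsq : ∀ a, a * a ∈ T)
    (h1 : (-1 : A) ∉ T) :
    ∃ I : Ideal A, I.IsPrime ∧ ∀ s : A, ∀ t ∈ T, s * s + t ∈ I → s ∈ I := by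
  obtain ⟨I, -, hI⟩ := zorn_le_nonempty₀ {I : Ideal A | ∀ t ∈ T, 1 + t ∉ I} (by
    intro c hc hchain y hy
    refine ⟨sSup c, ?_, fun z hz => le_sSup hz⟩
    intro t ht hmem
    obtain ⟨J, hJ, hJm⟩ := (Submodule.mem_sSup_of_directed ⟨y, hy⟩ hchain.directedOn).1 hmem
    exact hc hJ t ht hJm) ⊥ (by
    intro t ht h
    apply h1
    rw [Ideal.mem_bot] at h
    rwa [show (-1 : A) = t by linear_combination -h])
  -- any `a ∉ I` divides an element of `1 + T` modulo `I`
  have hout : ∀ a, a ∉ I → ∃ t ∈ T, ∃ c, 1 + t - c * a ∈ I := by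
    intro a ha
    by_contra hcon
    apply ha
    refine hI.le_of_ge (y := I ⊔ Ideal.span {a}) ?_ le_sup_left
      (Ideal.mem_sup_right (Ideal.mem_span_singleton_self a))
    intro t ht hmem
    obtain ⟨y, hy, z, hz, e⟩ := Submodule.mem_sup.1 hmem
    obtain ⟨c, rfl⟩ := Ideal.mem_span_singleton'.1 hz
    exact hcon ⟨t, ht, c, by rwa [← e, add_sub_cancel_right]⟩
  refine ⟨I, ⟨?_, ?_⟩, ?_⟩
  · intro htop
    exact hI.prop 0 T.zero_mem (htop ▸ Submodule.mem_top)
  · intro a b hab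
    by_contra! hcon
    obtain ⟨t, ht, c, hc⟩ := hout a hcon.1
    obtain ⟨t', ht', c', hc'⟩ := hout b hcon.2
    refine hI.prop (t + t' + t * t') (T.add_mem (T.add_mem ht ht') (T.mul_mem ht ht')) ?_
    have : 1 + (t + t' + t * t') =
        (1 + t - c * a) * (1 + t') + (c * a) * (1 + t' - c' * b) + (c * c') * (a * b) := by ring
    rw [this]
    exact I.add_mem (I.add_mem (I.mul_mem_right _ hc) (I.mul_mem_left _ hc'))
      (I.mul_mem_left _ hab)
  · intro s t ht hst
    by_contra hs
    obtain ⟨t', ht', c, hc⟩ := hout s hs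
    refine hI.prop (t' + t' + t' * t' + c * c * t) (T.add_mem (T.add_mem (T.add_mem ht' ht')
      (T.mul_mem ht' ht')) (T.mul_mem (hsq c) ht)) ?_
    have : 1 + (t' + t' + t' * t' + c * c * t) =
        (1 + t' - c * s) * (1 + t' + c * s) + c * c * (s * s + t) := by ring
    rw [this]
    exact I.add_mem (I.mul_mem_right _ hc) (I.mul_mem_left _ hst)

/-- A proper preordering is nonnegative under some homomorphism to a real closed field. -/
theorem exists_hom_of_neg_one_notMem {A : Type} [CommRing A] (T : Subsemiring A)
    (hsq : ∀ a, a * a ∈ T) (h1 : (-1 : A) ∉ T) :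
    ∃ (R : Type) (_ : Field R) (_ : LinearOrder R) (_ : IsStrictOrderedRing R) (ψ : A →+* R),
      Polynomial.PolyIVT R ∧ ∀ t ∈ T, 0 ≤ ψ t := by
  obtain ⟨I, hI, hreal⟩ := exists_real_prime T hsq h1
  set F := FractionRing (A ⧸ I)
  set Ω := AlgebraicClosure F
  set φ₀ : A →+* F := (algebraMap (A ⧸ I) F).comp (Ideal.Quotient.mk I) with hφ₀
  set φ : A →+* Ω := (algebraMap F Ω).comp φ₀ with hφ
  have hker : ∀ a, φ a = 0 ↔ a ∈ I := by
    intro a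
    rw [hφ, RingHom.comp_apply, map_eq_zero, hφ₀, RingHom.comp_apply,
      IsFractionRing.to_map_eq_zero_iff, Ideal.Quotient.eq_zero_iff_mem]
  have hfrac : ∀ h ∈ (algebraMap F Ω).fieldRange, ∃ a s : A, φ s ≠ 0 ∧ h * φ s = φ a := by
    rintro _ ⟨x, rfl⟩
    obtain ⟨a, s, hs, rfl⟩ := IsFractionRing.div_surjective (A := A ⧸ I) x
    obtain ⟨a, rfl⟩ := Ideal.Quotient.mk_surjective a
    obtain ⟨s, rfl⟩ := Ideal.Quotient.mk_surjective s
    have hs' := nonZeroDivisors.ne_zero hs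
    have hs0 : φ s ≠ 0 := by
      rw [Ne, hker, ← Ideal.Quotient.eq_zero_iff_mem]; exact hs'
    refine ⟨a, s, hs0, ?_⟩
    rw [map_div₀]
    exact div_mul_cancel₀ _ hs0
  have hcone : ∀ x ∈ extCone T φ (algebraMap F Ω).fieldRange,
      ∃ s : A, φ s ≠ 0 ∧ ∃ t ∈ T, x * φ s ^ 2 = φ t := by
    intro x hx
    rw [mem_extCone] at hx
    induction hx using AddSubmonoid.closure_induction with
    | mem x hx =>
      obtain ⟨t, ht, h, hh, rfl⟩ := hx
      obtain ⟨a, s, hs, e⟩ := hfrac h hh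
      refine ⟨s, hs, t * (a * a), T.mul_mem ht (hsq a), ?_⟩
      rw [map_mul, map_mul, ← e]; ring
    | zero => exact ⟨1, by simp, 0, T.zero_mem, by simp⟩
    | add x y _ _ hx hy =>
      obtain ⟨s, hs, t, ht, e⟩ := hx
      obtain ⟨s', hs', t', ht', e'⟩ := hy
      refine ⟨s * s', by rw [map_mul]; exact mul_ne_zero hs hs', t * (s' * s') + t' * (s * s),
        T.add_mem (T.mul_mem ht (hsq _)) (T.mul_mem ht' (hsq _)), ?_⟩
      simp only [map_add, map_mul, ← e, ← e']; ring
  obtain ⟨K, o, so, ψ, h⟩ := exists_ordered_subfield (T := T) (φ := φ)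
    (algebraMap F Ω).fieldRange (fun a => ⟨φ₀ a, rfl⟩)
    (fun x => by
      obtain ⟨f, hf, hfx⟩ := Algebra.IsAlgebraic.isAlgebraic (R := F) x
      refine ⟨f.map (algebraMap F Ω).rangeRestrictField, ?_, ?_⟩
      · exact (Polynomial.map_ne_zero_iff (RingHom.injective _)).2 hf
      · rw [Polynomial.aeval_def, Polynomial.eval₂_map]
        exact hfx)
    (fun hmem => by
      obtain ⟨s, hs, t, ht, e⟩ := hcone _ hmem
      apply hs
      rw [hker]
      apply hreal s t ht
      rw [← hker, map_add, map_mul, ← e]; ring)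
  exact ⟨K, inferInstance, o, so, ψ, h⟩

/-! ### Preorderings and the Positivstellensatz -/

/-- The preordering generated by the `g i`, as the subsemiring generated by them and all squares. -/
def semiPre {E : Type*} [CommRing E] {m : ℕ} (g : Fin m → E) : Subsemiring E :=
  Subsemiring.closure (Set.range g ∪ {x | ∃ a, x = a * a})

theorem semiPre_sq {E : Type*} [CommRing E] {m : ℕ} (g : Fin m → E) (a : E) :
    a * a ∈ semiPre g := Subsemiring.subset_closure (.inr ⟨a, rfl⟩)

theorem semiPre_gen {E : Type*} [CommRing E] {m : ℕ} (g : Fin m → E) (i : Fin m) :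
    g i ∈ semiPre g := Subsemiring.subset_closure (.inl ⟨i, rfl⟩)

/-- The Positivstellensatz of Krivine and Stengle: a polynomial positive on `K_S` satisfies
`t₁ F = 1 + t₂` with `t₁`, `t₂` in the preordering. -/
theorem exists_certificate {n m : ℕ} (g : Fin m → MvPolynomial (Fin n) ℝ)
    (F : MvPolynomial (Fin n) ℝ) (hF : ∀ x ∈ KS g, 0 < eval x F) :
    ∃ t₁ ∈ semiPre g, ∃ t₂ ∈ semiPre g, t₁ * F = 1 + t₂ := by
  classical
  let T : Subsemiring (MvPolynomial (Fin n) ℝ) :=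
    { carrier := {x | ∃ s ∈ semiPre g, ∃ t ∈ semiPre g, x = s - F * t}
      zero_mem' := ⟨0, zero_mem _, 0, zero_mem _, by ring⟩
      one_mem' := ⟨1, one_mem _, 0, zero_mem _, by ring⟩
      add_mem' := by
        rintro _ _ ⟨s, hs, t, ht, rfl⟩ ⟨s', hs', t', ht', rfl⟩
        exact ⟨_, add_mem hs hs', _, add_mem ht ht', by ring⟩
      mul_mem' := by
        rintro _ _ ⟨s, hs, t, ht, rfl⟩ ⟨s', hs', t', ht', rfl⟩
        exact ⟨_, add_mem (mul_mem hs hs') (mul_mem (semiPre_sq g F) (mul_mem ht ht')),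
          _, add_mem (mul_mem hs ht') (mul_mem ht hs'), by ring⟩ }
  by_cases h1 : (-1 : MvPolynomial (Fin n) ℝ) ∈ T
  · obtain ⟨s, hs, t, ht, e⟩ := h1
    exact ⟨t, ht, s, hs, by linear_combination e⟩
  exfalso
  obtain ⟨R, _, _, _, ψ, hR, hψ⟩ := exists_hom_of_neg_one_notMem T
    (fun a => ⟨_, semiPre_sq g a, 0, zero_mem _, by ring⟩) h1
  have hψe : ∀ q, ψ q = eval₂Hom (ψ.comp C) (fun i => ψ (X i)) q := by
    intro q
    have : ψ = eval₂Hom (ψ.comp C) (fun i => ψ (X i)) := by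
      apply MvPolynomial.ringHom_ext <;> simp
    exact congrArg (fun χ : MvPolynomial (Fin n) ℝ →+* R => χ q) this
  obtain ⟨x, hx⟩ := exists_real_point hR (ψ.comp C) (insert F (Finset.univ.image g))
    (fun i => ψ (X i))
  simp only [← hψe] at hx
  have hxK : x ∈ KS g := by
    intro i
    rw [← sign_nonneg_iff, ← hx (g i) (by simp), sign_nonneg_iff]
    exact hψ _ ⟨_, semiPre_gen g i, 0, zero_mem _, by ring⟩
  have hF' := hF x hxK
  rw [← sign_eq_one_iff, ← hx F (by simp), sign_eq_one_iff] at hF'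
  have := hψ (-F) ⟨0, zero_mem _, 1, one_mem _, by ring⟩
  rw [map_neg] at this
  linarith

theorem genPreordering_add {E : Type*} [CommRing E] {m : ℕ} {g : Fin m → E} {x y : E}
    (hx : x ∈ genPreordering g) (hy : y ∈ genPreordering g) : x + y ∈ genPreordering g := by
  obtain ⟨σ, hσ, rfl⟩ := hx
  obtain ⟨τ, hτ, rfl⟩ := hy
  refine ⟨fun ν => σ ν + τ ν, fun ν => (hσ ν).add (hτ ν), ?_⟩
  rw [← Finset.sum_add_distrib]
  exact Finset.sum_congr rfl fun ν _ => by ring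

/-- Products of generators are reduced to exponents in `{0, 1}` by moving even powers into the square
factor. -/
theorem semiPre_subset_genPreordering {E : Type*} [CommRing E] {m : ℕ} (g : Fin m → E) {x : E}
    (hx : x ∈ semiPre g) : x ∈ genPreordering g := by
  classical
  -- the monoid generated by the `g j` and squares consists of the `a² ∏ g_j^{ν_j}`
  let M : Submonoid E :=
    { carrier := {x | ∃ (a : E) (ν : Fin m → Bool), x = a * a * ∏ j, (if ν j then g j else 1)}
      one_mem' := ⟨1, fun _ => false, by simp⟩
      mul_mem' := by
        rintro _ _ ⟨a, ν, rfl⟩ ⟨b, μ, rfl⟩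
        refine ⟨a * b * ∏ j, (if ν j && μ j then g j else 1), fun j => xor (ν j) (μ j), ?_⟩
        have : (∏ j, (if ν j then g j else 1)) * ∏ j, (if μ j then g j else 1) =
            (∏ j, (if ν j && μ j then g j else 1)) * (∏ j, (if ν j && μ j then g j else 1)) *
              ∏ j, (if xor (ν j) (μ j) then g j else 1) := by
          simp only [← Finset.prod_mul_distrib]
          refine Finset.prod_congr rfl fun j _ => ?_
          cases ν j <;> cases μ j <;> simp
        linear_combination (a * a * b * b) * this }
  have hle : semiPre g ≤ M.subsemiringClosure := by
    refine Subsemiring.closure_le.2 ?_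
    rintro y (⟨i, rfl⟩ | ⟨a, rfl⟩)
    · refine (Submonoid.subsemiringClosure_mem M).2 (AddSubmonoid.subset_closure
        ⟨1, fun j => decide (j = i), ?_⟩)
      simp
    · exact (Submonoid.subsemiringClosure_mem M).2 (AddSubmonoid.subset_closure
        ⟨a, fun _ => false, by simp⟩)
  have hx' : x ∈ AddSubmonoid.closure (M : Set E) := (Submonoid.subsemiringClosure_mem M).1 (hle hx)
  clear hx hle
  induction hx' using AddSubmonoid.closure_induction with
  | mem y hy =>
    obtain ⟨a, ν, rfl⟩ := hy
    refine ⟨fun μ => if μ = ν then a * a else 0, fun μ => ?_, ?_⟩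
    · dsimp only
      split_ifs
      · exact IsSumSq.mul_self a
      · exact IsSumSq.zero
    · simp [ite_mul]
  | zero => exact ⟨fun _ => 0, fun _ => IsSumSq.zero, by simp⟩
  | add y z _ _ hy hz => exact genPreordering_add hy hz

/-! ### Positive functionals on the localization -/

section functional
variable {E : Type*} [CommRing E] [Algebra ℝ E] {P : Subsemiring E} {L : E →ₗ[ℝ] ℝ}

/-- The Cauchy–Schwarz inequality for a functional nonnegative on squares. -/
theorem cauchy_schwarz (hsq : ∀ a, a * a ∈ P) (hL : ∀ x ∈ P, 0 ≤ L x) (x y : E) :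
    L (x * y) ^ 2 ≤ L (x * x) * L (y * y) := by
  have h : ∀ s : ℝ, 0 ≤ L (y * y) * (s * s) + (2 * L (x * y)) * s + L (x * x) := by
    intro s
    have := hL _ (hsq (s • y + x))
    have e : (s • y + x) * (s • y + x) = (s * s) • (y * y) + (2 * s) • (x * y) + x * x := by
      simp only [Algebra.smul_def, map_mul, map_ofNat]; ring
    rw [e, map_add, map_add, map_smul, map_smul, smul_eq_mul, smul_eq_mul] at this
    linarith
  have := discrim_le_zero h
  rw [discrim] at this
  linarith

/-- A certificate for `c - a² > 0` bounds `L (a²)` by `c L(1)`. It gives `L (a^(2m)) ≤ c^m L (1 + t₂)`,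
while Cauchy–Schwarz gives `L (a^(2^(j+1))) ≥ L(1) (c ρ)^(2^j)` with `ρ = L (a²) / (c L(1))`, so `ρ > 1`
is impossible. -/
theorem apply_sq_le (hsq : ∀ a, a * a ∈ P) (hL : ∀ x ∈ P, 0 ≤ L x) {c : ℝ} (hc : 0 < c)
    {a t₁ t₂ : E} (h₁ : t₁ ∈ P) (h₂ : t₂ ∈ P) (e : t₁ * (algebraMap ℝ E c - a * a) = 1 + t₂) :
    L (a * a) ≤ c * L 1 := by
  have hpow : ∀ m, (a ^ m) * (a ^ m) ∈ P := fun m => hsq _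
  have hw : ∀ m, L ((1 + t₂) * (a ^ m * a ^ m)) ≤ c ^ m * L (1 + t₂) := by
    intro m
    induction m with
    | zero => simp
    | succ m ih =>
      have h := hL _ (mul_mem h₁ (mul_mem (hsq (algebraMap ℝ E c - a * a)) (hpow m)))
      have e' : t₁ * ((algebraMap ℝ E c - a * a) * (algebraMap ℝ E c - a * a) * (a ^ m * a ^ m)) =
          c • ((1 + t₂) * (a ^ m * a ^ m)) - (1 + t₂) * (a ^ (m + 1) * a ^ (m + 1)) := by
        rw [Algebra.smul_def, ← e]; ring
      rw [e', map_sub, map_smul, smul_eq_mul] at h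
      have := mul_le_mul_of_nonneg_left ih hc.le
      rw [pow_succ c m]
      linarith
  have hs : ∀ m, L (a ^ m * a ^ m) ≤ c ^ m * L (1 + t₂) := by
    intro m
    have h := hL _ (mul_mem h₂ (hpow m))
    have := hw m
    rw [add_mul, one_mul, map_add] at this
    linarith
  have h1 : 0 ≤ L 1 := hL 1 P.one_mem
  by_contra hcon
  rw [not_le] at hcon
  have hcs : ∀ m, L (a ^ m * a ^ m) ^ 2 ≤ L 1 * L (a ^ (2 * m) * a ^ (2 * m)) := by
    intro m
    have := cauchy_schwarz hsq hL 1 (a ^ m * a ^ m)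
    rw [one_mul, one_mul] at this
    rwa [show a ^ (2 * m) * a ^ (2 * m) = a ^ m * a ^ m * (a ^ m * a ^ m) by ring]
  have hpos : 0 < L 1 := by
    rcases h1.lt_or_eq with h | h
    · exact h
    · have := hcs 1
      rw [← h, zero_mul, pow_one] at this
      rw [← h, mul_zero] at hcon
      nlinarith
  set ρ := L (a * a) / (c * L 1) with hρ
  have hcL : 0 < c * L 1 := mul_pos hc hpos
  have hρ1 : 1 < ρ := by rw [hρ, one_lt_div hcL]; exact hcon
  have hρa : L (a * a) = ρ * (c * L 1) := by rw [hρ]; field_simp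
  have hlow : ∀ j : ℕ, L 1 * (c * ρ) ^ (2 ^ j) ≤ L (a ^ (2 ^ j) * a ^ (2 ^ j)) := by
    intro j
    induction j with
    | zero => simp only [pow_zero, pow_one]; rw [hρa]; linarith
    | succ j ih =>
      have hnn : 0 ≤ L 1 * (c * ρ) ^ (2 ^ j) := by positivity
      have h := (pow_le_pow_left₀ hnn ih 2).trans (hcs (2 ^ j))
      rw [pow_succ', pow_mul']
      rw [mul_pow, pow_two (L 1), mul_assoc] at h
      exact le_of_mul_le_mul_left h hpos
  have hb : ∀ j : ℕ, ρ ^ j ≤ L (1 + t₂) / L 1 := by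
    intro j
    have h := (hlow j).trans (hs (2 ^ j))
    rw [mul_pow, mul_comm (L 1), mul_assoc] at h
    have h' := le_of_mul_le_mul_left h (by positivity)
    rw [le_div_iff₀ hpos]
    refine le_trans ?_ h'
    gcongr
    · exact hρ1.le
    · exact Nat.lt_two_pow_self.le
  obtain ⟨j, hj⟩ := pow_unbounded_of_one_lt (L (1 + t₂) / L 1) hρ1
  exact absurd (hb j) (not_le.2 hj)

end functional

/-- Every polynomial is bounded on `K_S` by a multiple of a power of `p`. -/
theorem exists_growth {n m : ℕ} {g : Fin m → MvPolynomial (Fin n) ℝ} {p : MvPolynomial (Fin n) ℝ}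
    {k : ℕ} (hp1 : ∀ x ∈ KS g, 1 ≤ eval x p)
    (hpgrow : ∀ x ∈ KS g, ∑ i, (x i) ^ 2 ≤ (k : ℝ) * eval x p) (F : MvPolynomial (Fin n) ℝ) :
    ∃ (c : ℝ) (l : ℕ), 0 ≤ c ∧ ∀ x ∈ KS g, |eval x F| ≤ c * eval x p ^ l := by
  induction F using MvPolynomial.induction_on with
  | C a => exact ⟨|a|, 0, abs_nonneg a, fun x _ => by simp⟩
  | add F G hF hG =>
    obtain ⟨c, l, hc, h⟩ := hF
    obtain ⟨c', l', hc', h'⟩ := hG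
    refine ⟨c + c', max l l', add_nonneg hc hc', fun x hx => ?_⟩
    rw [map_add, add_mul]
    refine (abs_add_le _ _).trans (add_le_add ((h x hx).trans ?_) ((h' x hx).trans ?_))
    · exact mul_le_mul_of_nonneg_left (pow_le_pow_right₀ (hp1 x hx) (le_max_left _ _)) hc
    · exact mul_le_mul_of_nonneg_left (pow_le_pow_right₀ (hp1 x hx) (le_max_right _ _)) hc'
  | mul_X F i hF =>
    obtain ⟨c, l, hc, h⟩ := hF
    refine ⟨c * (1 + k), l + 1, by positivity, fun x hx => ?_⟩
    rw [map_mul, eval_X, abs_mul]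
    have h1 : (x i) ^ 2 ≤ ∑ i, (x i) ^ 2 :=
      Finset.single_le_sum (f := fun i => (x i) ^ 2) (fun _ _ => sq_nonneg _) (Finset.mem_univ i)
    have h2 : |x i| ≤ (1 + k) * eval x p := by
      have := hpgrow x hx
      have := hp1 x hx
      have : |x i| ≤ 1 + x i ^ 2 := by
        rw [← sq_abs]; nlinarith [sq_nonneg (|x i| - 1), abs_nonneg (x i)]
      linarith
    calc |eval x F| * |x i| ≤ (c * eval x p ^ l) * ((1 + k) * eval x p) :=
          mul_le_mul (h x hx) h2 (abs_nonneg _) ((abs_nonneg _).trans (h x hx))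
      _ = c * (1 + k) * eval x p ^ (l + 1) := by ring

theorem map_semiPre {A E : Type*} [CommRing A] [CommRing E] (θ : A →+* E) {m : ℕ} (g : Fin m → A)
    {t : A} (ht : t ∈ semiPre g) : θ t ∈ semiPre fun i => θ (g i) := by
  have : semiPre g ≤ (semiPre fun i => θ (g i)).comap θ := by
    refine Subsemiring.closure_le.2 ?_
    rintro y (⟨i, rfl⟩ | ⟨a, rfl⟩)
    · exact semiPre_gen (fun i => θ (g i)) i
    · simpa using semiPre_sq (fun i => θ (g i)) (θ a)
  exact this ht

/-- A functional on `E` nonnegative on the preordering is nonnegative on polynomials `F ≥ 0` on `K_S`.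
With `0 ≤ F ≤ M q²` for a power `q` of `p`, the element `a = M/2 - F/q²` satisfies `a² ≤ (M/2)²` on
`K_S`; `apply_sq_le` for the functional `L (q² ·)` and Cauchy–Schwarz give
`L (q² a) ≤ (M/2) L (q²)`, which is the claim. -/
theorem apply_nonneg_of_nonneg {n m : ℕ} {D : Submonoid (MvPolynomial (Fin n) ℝ)}
    {g : Fin m → MvPolynomial (Fin n) ℝ} {p : MvPolynomial (Fin n) ℝ} (hpD : p ∈ D)
    {k : ℕ} (hp1 : ∀ x ∈ KS g, 1 ≤ eval x p)
    (hpgrow : ∀ x ∈ KS g, ∑ i, (x i) ^ 2 ≤ (k : ℝ) * eval x p)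
    {L : Localization D →ₗ[ℝ] ℝ}
    (hL : ∀ t ∈ semiPre fun i => algebraMap _ (Localization D) (g i), 0 ≤ L t)
    {F : MvPolynomial (Fin n) ℝ} (hF : ∀ x ∈ KS g, 0 ≤ eval x F) :
    0 ≤ L (algebraMap _ (Localization D) F) := by
  set θ := algebraMap (MvPolynomial (Fin n) ℝ) (Localization D) with hθ
  set P := semiPre fun i => θ (g i) with hP
  obtain ⟨M, l, hM, hg⟩ := exists_growth hp1 hpgrow F
  have hq : ∀ x ∈ KS g, 1 ≤ eval x (p ^ l) := fun x hx => by
    rw [map_pow]; exact one_le_pow₀ (hp1 x hx)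
  have hqD : p ^ l ∈ D := pow_mem hpD l
  simp only [← map_pow] at hg
  generalize p ^ l = q at hq hqD hg
  have hFq : ∀ x ∈ KS g, eval x F ≤ M * eval x q ^ 2 := by
    intro x hx
    have h := (le_abs_self _).trans (hg x hx)
    refine h.trans (mul_le_mul_of_nonneg_left ?_ hM)
    exact le_self_pow₀ (hq x hx) two_ne_zero
  set b : Localization D := IsLocalization.mk' _ F (⟨q, hqD⟩ ^ 2 : D) with hb
  have hbq : θ q ^ 2 * b = θ F := by
    have := IsLocalization.mk'_spec' (Localization D) F (⟨q, hqD⟩ ^ 2 : D)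
    rw [hb, hθ, ← map_pow]
    exact this
  have hC : ∀ r : ℝ, θ (C r) = algebraMap ℝ (Localization D) r := fun r => by
    rw [IsScalarTower.algebraMap_apply ℝ (MvPolynomial (Fin n) ℝ) (Localization D)]; rfl
  set a : Localization D := algebraMap ℝ _ (M / 2) - b with ha
  set u := C (M / 2) * q ^ 2 - F with hu
  have hau : θ q ^ 2 * a = θ u := by
    rw [ha, hu, map_sub, map_mul, map_pow, hC, mul_sub, hbq]; ring
  set L' : Localization D →ₗ[ℝ] ℝ := L ∘ₗ LinearMap.mulLeft ℝ (θ q ^ 2) with hL'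
  have hL'a : ∀ y, L' y = L (θ q ^ 2 * y) := fun y => rfl
  have hsq : ∀ y, y * y ∈ P := fun y => semiPre_sq _ y
  have hL'P : ∀ y ∈ P, 0 ≤ L' y := by
    intro y hy
    rw [hL'a, pow_two]
    exact hL _ (mul_mem (hsq _) hy)
  have hkey : ∀ c : ℝ, (M / 2) ^ 2 < c → L' (a * a) ≤ c * L' 1 := by
    intro c hc
    have hc0 : 0 < c := (sq_nonneg _).trans_lt hc
    obtain ⟨t₁, h₁, t₂, h₂, e⟩ := exists_certificate g (C c * q ^ 4 - u * u) (by
      intro x hx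
      have hq1 := hq x hx
      have h1 := hFq x hx
      have h2 := hF x hx
      simp only [hu, map_sub, map_mul, map_pow, eval_C]
      set y := eval x q
      set z := eval x F
      have h3 : (M / 2 * y ^ 2 - z) * (M / 2 * y ^ 2 - z) ≤ (M / 2) ^ 2 * y ^ 4 := by
        nlinarith [mul_nonneg h2 (sub_nonneg.2 h1)]
      have h4 : 0 < y ^ 4 := by positivity
      have h5 := mul_lt_mul_of_pos_right hc h4
      linarith)
    refine apply_sq_le hsq hL'P hc0 (t₁ := θ t₁ * (θ (q * q) * θ (q * q))) (t₂ := θ t₂)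
      (mul_mem (map_semiPre θ g h₁) (hsq _)) (map_semiPre θ g h₂) ?_
    have e' := congrArg θ e
    simp only [map_mul, map_sub, map_add, map_one, map_pow, hC] at e'
    rw [← e', ← hau, map_mul]; ring
  have h1 : 0 ≤ L' 1 := hL'P 1 P.one_mem
  have hle : L' (a * a) ≤ (M / 2) ^ 2 * L' 1 := by
    refine le_of_forall_pos_le_add fun ε hε => ?_
    have h := hkey ((M / 2) ^ 2 + ε / (L' 1 + 1)) (by
      have : 0 < ε / (L' 1 + 1) := by positivity
      linarith)
    have h' : ε / (L' 1 + 1) * L' 1 ≤ ε := by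
      rw [div_mul_eq_mul_div, div_le_iff₀ (by linarith)]
      nlinarith
    linarith
  have hcs := cauchy_schwarz hsq hL'P 1 a
  rw [one_mul, one_mul] at hcs
  have hLa : L' a ≤ M / 2 * L' 1 := by
    exact (abs_le_of_sq_le_sq' (by nlinarith) (by positivity)).2
  have hfin : L (θ F) = M / 2 * L' 1 - L' a := by
    have : L' b = L (θ F) := by rw [hL'a, hbq]
    rw [← this, ha, map_sub, Algebra.algebraMap_eq_smul_one, map_smul, smul_eq_mul]; ring
  rw [hfin]; linarith

/-! ### Covers of small total cost -/

/-- A bounded set is covered by at most `(3 B s)^n` sup-norm balls of radius `1/s` centred in it. -/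
theorem exists_grid_net {n : ℕ} (A : Set (Fin n → ℝ)) (B s : ℕ) (hB : 1 ≤ B) (hs : 1 ≤ s)
    (hA : ∀ x ∈ A, ‖x‖ ≤ B) :
    ∃ J : Finset (Fin n → ℝ), (∀ a ∈ J, a ∈ A) ∧ J.card ≤ (3 * B * s) ^ n ∧
      ∀ x ∈ A, ∃ a ∈ J, x ∈ Metric.ball a (1 / s) := by
  classical
  have hs0 : (0 : ℝ) < s := by exact_mod_cast hs
  let cell : (Fin n → ℝ) → Fin n → ℤ := fun x i => ⌊(s : ℝ) * x i⌋
  set box : Finset (Fin n → ℤ) :=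
    Fintype.piFinset fun _ => Finset.Icc (-(B * s : ℕ) : ℤ) (B * s : ℕ) with hbox
  have hcell : ∀ x ∈ A, cell x ∈ box := by
    intro x hx
    rw [hbox, Fintype.mem_piFinset]
    intro i
    have h := (norm_le_pi_norm x i).trans (hA x hx)
    rw [Real.norm_eq_abs, abs_le] at h
    rw [Finset.mem_Icc]
    constructor
    · apply Int.le_floor.2
      push_cast
      nlinarith
    · have : ((cell x i : ℤ) : ℝ) ≤ ((B * s : ℕ) : ℤ) := by
        refine (Int.floor_le _).trans ?_
        push_cast
        nlinarith
      exact_mod_cast this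
  choose! rep hrep using fun (c : Fin n → ℤ) (h : ∃ x ∈ A, cell x = c) => h
  refine ⟨(box.filter fun c => ∃ x ∈ A, cell x = c).image rep, ?_, ?_, ?_⟩
  · intro a ha
    obtain ⟨c, hc, rfl⟩ := Finset.mem_image.1 ha
    exact (hrep c (Finset.mem_filter.1 hc).2).1
  · refine Finset.card_image_le.trans ((Finset.card_filter_le _ _).trans ?_)
    rw [hbox, Fintype.card_piFinset_const, Int.card_Icc]
    have h1 : 1 ≤ B * s := Nat.mul_le_mul hB hs
    have : ((B * s : ℕ) + 1 - (-(B * s : ℕ)) : ℤ).toNat = 2 * (B * s) + 1 := by omega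
    rw [this]
    refine Nat.pow_le_pow_left ?_ n
    rw [mul_assoc]
    omega
  · intro x hx
    have hr := hrep (cell x) ⟨x, hx, rfl⟩
    refine ⟨rep (cell x), Finset.mem_image_of_mem _ (Finset.mem_filter.2 ⟨hcell x hx, x, hx, rfl⟩),
      ?_⟩
    rw [Metric.mem_ball, dist_pi_lt_iff (by positivity)]
    intro i
    have he : ⌊(s : ℝ) * rep (cell x) i⌋ = ⌊(s : ℝ) * x i⌋ := congrFun hr.2 i
    have := Int.abs_sub_lt_one_of_floor_eq_floor he.symm
    rw [← mul_sub, abs_mul, abs_of_pos hs0] at this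
    rw [Real.dist_eq, lt_div_iff₀ hs0]
    linarith

/-- A compact set in `ℝⁿ` has a finite cover by balls of radius `δ` for which the total of
`δ^(2(n+1)) M(centre)` is as small as desired, for an arbitrary weight `M ≥ 0`. The sublevel set
`M ≤ j` needs only `O(s^n)` balls of radius `1/s`, so its cost is `O(j / s)`; it is made less than
`η / 2^(j+1)` by the choice of `s = s_j`. -/
theorem exists_cheap_cover {n : ℕ} {K : Set (Fin n → ℝ)} (hK : IsCompact K)
    (M : (Fin n → ℝ) → ℝ) (hM : ∀ a ∈ K, 0 ≤ M a) {η : ℝ} (hη : 0 < η) :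
    ∃ (t : Finset (Σ _ : ℕ, (Fin n → ℝ))) (δ : ℕ → ℝ),
      (∀ i ∈ t, i.2 ∈ K) ∧ (∀ j, 0 < δ j ∧ δ j ≤ 1) ∧
      (∀ x ∈ K, ∃ i ∈ t, x ∈ Metric.ball i.2 (δ i.1)) ∧
      ∑ i ∈ t, δ i.1 ^ (2 * (n + 1)) * M i.2 ≤ η := by
  classical
  obtain ⟨B₀, hB₀⟩ := hK.isBounded.exists_norm_le
  obtain ⟨B, hB1, hB⟩ : ∃ B : ℕ, 1 ≤ B ∧ ∀ x ∈ K, ‖x‖ ≤ B :=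
    ⟨⌈B₀⌉₊ + 1, by omega, fun x hx => (hB₀ x hx).trans ((Nat.le_ceil B₀).trans (by simp))⟩
  have hsex : ∀ j : ℕ, ∃ s : ℕ, 1 ≤ s ∧ ((3 * B : ℕ) : ℝ) ^ n * j * 2 ^ (j + 1) / η ≤ s := by
    intro j
    obtain ⟨s, hs⟩ := exists_nat_ge (((3 * B : ℕ) : ℝ) ^ n * j * 2 ^ (j + 1) / η)
    exact ⟨s + 1, by omega, hs.trans (by simp)⟩
  choose s hs1 hs using hsex
  choose J hJA hJc hJ using fun j : ℕ => exists_grid_net {a | a ∈ K ∧ M a ≤ j} B (s j) hB1 (hs1 j)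
    (fun x hx => hB x hx.1)
  have hs0 : ∀ j, (1 : ℝ) ≤ s j := fun j => by exact_mod_cast hs1 j
  have hcost : ∀ j, ∑ a ∈ J j, (1 / (s j : ℝ)) ^ (2 * (n + 1)) * M a ≤ η / 2 / 2 ^ j := by
    intro j
    have hsj := hs0 j
    have h1 : ∑ a ∈ J j, (1 / (s j : ℝ)) ^ (2 * (n + 1)) * M a ≤
        (J j).card • ((1 / (s j : ℝ)) ^ (n + 1) * j) := by
      refine Finset.sum_le_card_nsmul _ _ _ fun a ha => ?_
      refine mul_le_mul ?_ (hJA j a ha).2 (hM a (hJA j a ha).1) (by positivity)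
      exact pow_le_pow_of_le_one (by positivity) (by rw [div_le_one (by linarith)]; exact hsj)
        (by omega)
    refine h1.trans ?_
    rw [nsmul_eq_mul]
    have h2 : ((J j).card : ℝ) ≤ ((3 * B : ℕ) : ℝ) ^ n * (s j : ℝ) ^ n := by
      have := hJc j
      rw [mul_pow] at this
      exact_mod_cast this
    have h3 := hs j
    rw [div_le_iff₀ hη] at h3
    calc ((J j).card : ℝ) * ((1 / (s j : ℝ)) ^ (n + 1) * j)
        ≤ ((3 * B : ℕ) : ℝ) ^ n * (s j : ℝ) ^ n * ((1 / (s j : ℝ)) ^ (n + 1) * j) :=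
          mul_le_mul_of_nonneg_right h2 (by positivity)
      _ = ((3 * B : ℕ) : ℝ) ^ n * j / s j := by
          have : (s j : ℝ) ≠ 0 := by linarith
          rw [one_div, inv_pow, pow_succ]
          field_simp
      _ ≤ η / 2 / 2 ^ j := by
          rw [div_le_iff₀ (by linarith), div_div, div_mul_eq_mul_div, le_div_iff₀ (by positivity),
            ← pow_succ']
          linarith
  obtain ⟨b, hb, hbf, hbK⟩ := hK.elim_finite_subcover_image
    (b := {i : Σ _ : ℕ, (Fin n → ℝ) | i.2 ∈ J i.1})
    (c := fun i => Metric.ball i.2 (1 / s i.1)) (fun i _ => Metric.isOpen_ball) (by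
      intro x hx
      obtain ⟨j, hj⟩ := exists_nat_ge (M x)
      obtain ⟨a, ha, hxa⟩ := hJ j x ⟨hx, hj⟩
      exact Set.mem_biUnion (x := (⟨j, a⟩ : Σ _ : ℕ, (Fin n → ℝ))) ha hxa)
  refine ⟨hbf.toFinset, fun j => 1 / s j, ?_, ?_, ?_, ?_⟩
  · intro i hi
    exact (hJA _ _ (hb (hbf.mem_toFinset.1 hi))).1
  · intro j
    have := hs0 j
    exact ⟨by positivity, by rw [div_le_one (by linarith)]; exact this⟩
  · intro x hx
    obtain ⟨i, hi, h⟩ := Set.mem_iUnion₂.1 (hbK hx)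
    exact ⟨i, hbf.mem_toFinset.2 hi, h⟩
  · set m := hbf.toFinset.sup (fun i => i.1) + 1
    have hsub : hbf.toFinset ⊆ (Finset.range m).sigma J := by
      intro i hi
      rw [Finset.mem_sigma, Finset.mem_range]
      exact ⟨Nat.lt_succ_of_le (Finset.le_sup (f := fun i : Σ _ : ℕ, (Fin n → ℝ) => i.1) hi),
        hb (hbf.mem_toFinset.1 hi)⟩
    refine (Finset.sum_le_sum_of_subset_of_nonneg hsub fun i hi _ => ?_).trans ?_
    · have := hM _ (hJA _ _ (Finset.mem_sigma.1 hi).2).1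
      positivity
    · rw [Finset.sum_sigma]
      refine (Finset.sum_le_sum fun j _ => hcost j).trans ?_
      have h := (summable_geometric_two' η).sum_le_tsum (Finset.range m)
        (fun j _ => by positivity)
      rwa [tsum_geometric_two'] at h

/-- A polynomial is bounded and Lipschitz on the ball of radius `R`. -/
theorem exists_lipschitz {n : ℕ} (R : ℝ) (F : MvPolynomial (Fin n) ℝ) :
    ∃ c : ℝ, 0 ≤ c ∧ ∀ x y : Fin n → ℝ, ‖x‖ ≤ R → ‖y‖ ≤ R →
      |eval x F| ≤ c ∧ |eval x F - eval y F| ≤ c * ‖x - y‖ := by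
  induction F using MvPolynomial.induction_on with
  | C a => exact ⟨|a|, abs_nonneg a, fun x y _ _ => ⟨by simp, by simp; positivity⟩⟩
  | add F G hF hG =>
    obtain ⟨c, hc, h⟩ := hF
    obtain ⟨c', hc', h'⟩ := hG
    refine ⟨c + c', add_nonneg hc hc', fun x y hx hy => ⟨?_, ?_⟩⟩
    · rw [map_add]
      exact (abs_add_le _ _).trans (add_le_add (h x y hx hy).1 (h' x y hx hy).1)
    · rw [map_add, map_add, add_sub_add_comm, add_mul]
      exact (abs_add_le _ _).trans (add_le_add (h x y hx hy).2 (h' x y hx hy).2)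
  | mul_X F i hF =>
    obtain ⟨c, hc, h⟩ := hF
    refine ⟨c * |R| + c, by positivity, fun x y hx hy => ?_⟩
    have hxi : |x i| ≤ |R| := (norm_le_pi_norm x i).trans (hx.trans (le_abs_self R))
    have hyi : |y i| ≤ |R| := (norm_le_pi_norm y i).trans (hy.trans (le_abs_self R))
    have hxyi : |x i - y i| ≤ ‖x - y‖ := norm_le_pi_norm (x - y) i
    obtain ⟨h1, h2⟩ := h x y hx hy
    simp only [map_mul, eval_X]
    constructor
    · rw [abs_mul]
      nlinarith [mul_le_mul h1 hxi (abs_nonneg _) hc]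
    · have e : eval x F * x i - eval y F * y i =
          eval x F * (x i - y i) + (eval x F - eval y F) * y i := by ring
      rw [e]
      refine (abs_add_le _ _).trans ?_
      rw [abs_mul, abs_mul]
      have h3 := mul_le_mul h1 hxyi (abs_nonneg _) hc
      have h4 := mul_le_mul h2 hyi (abs_nonneg _) (by positivity)
      nlinarith

/-! ### Polynomials nonnegative off a compact set -/

/-- Multiply `f` by the square of the common denominator `∏ e_i` and add a multiple of the square of
each complementary product, with weights `c_i` such that on `K` some `c_i` outweighs `B e_i²`. The sum is
nonnegative on all of `K_S`; dividing by `(∏ e_i)²` again gives `f + ∑ c_i / e_i²`. -/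
theorem apply_add_sum_nonneg {n m : ℕ} {D : Submonoid (MvPolynomial (Fin n) ℝ)}
    {g : Fin m → MvPolynomial (Fin n) ℝ} {p : MvPolynomial (Fin n) ℝ} (hpD : p ∈ D) {k : ℕ}
    (hp1 : ∀ x ∈ KS g, 1 ≤ eval x p)
    (hpgrow : ∀ x ∈ KS g, ∑ i, (x i) ^ 2 ≤ (k : ℝ) * eval x p)
    {L : Localization D →ₗ[ℝ] ℝ}
    (hL : ∀ t ∈ semiPre fun i => algebraMap _ (Localization D) (g i), 0 ≤ L t)
    {K : Set (Fin n → ℝ)} {f : MvPolynomial (Fin n) ℝ} (hf : ∀ x ∈ KS g \ K, 0 ≤ eval x f)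
    {ι : Type*} (t : Finset ι) (e : ι → MvPolynomial (Fin n) ℝ) (u : ι → Localization D)
    (hu : ∀ i ∈ t, u i * algebraMap _ (Localization D) (e i) = 1)
    (c : ι → ℝ) (hc : ∀ i ∈ t, 0 ≤ c i) {B : ℝ} (hB : ∀ x ∈ K, -B ≤ eval x f)
    (hcov : ∀ x ∈ K, ∃ i ∈ t, B * eval x (e i) ^ 2 ≤ c i) :
    0 ≤ L (algebraMap _ (Localization D) f) + ∑ i ∈ t, c i * L (u i * u i) := by
  classical
  set θ := algebraMap (MvPolynomial (Fin n) ℝ) (Localization D) with hθ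
  set y := ∏ i ∈ t, u i with hy
  set G := f * (∏ i ∈ t, e i) ^ 2 + ∑ i ∈ t, C (c i) * (∏ j ∈ t.erase i, e j) ^ 2 with hG
  have hGnn : ∀ x ∈ KS g, 0 ≤ eval x G := by
    intro x hx
    have hterm : ∀ i ∈ t, 0 ≤ c i * (∏ j ∈ t.erase i, eval x (e j)) ^ 2 :=
      fun i hi => mul_nonneg (hc i hi) (sq_nonneg _)
    rw [hG]
    simp only [map_add, map_sum, map_mul, map_pow, map_prod, eval_C]
    by_cases hxK : x ∈ K
    · obtain ⟨i, hi, hci⟩ := hcov x hxK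
      have h1 := Finset.single_le_sum hterm hi
      rw [← Finset.mul_prod_erase t _ hi]
      have h2 := mul_le_mul_of_nonneg_right hci (sq_nonneg (∏ j ∈ t.erase i, eval x (e j)))
      have h3 := mul_le_mul_of_nonneg_right (hB x hxK)
        (sq_nonneg (eval x (e i) * ∏ j ∈ t.erase i, eval x (e j)))
      nlinarith
    · exact add_nonneg (mul_nonneg (hf x ⟨hx, hxK⟩) (sq_nonneg _)) (Finset.sum_nonneg hterm)
  have hL' : ∀ z ∈ semiPre fun i => θ (g i), 0 ≤ (L ∘ₗ LinearMap.mulLeft ℝ (y * y)) z :=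
    fun z hz => hL _ (mul_mem (semiPre_sq _ y) hz)
  have key := apply_nonneg_of_nonneg hpD hp1 hpgrow hL' hGnn
  have hprod : ∀ s ⊆ t, (∏ i ∈ s, u i) * ∏ i ∈ s, θ (e i) = 1 := by
    intro s hs
    rw [← Finset.prod_mul_distrib]
    exact Finset.prod_eq_one fun i hi => hu i (hs hi)
  have hsum : y * y * θ G = θ f + ∑ i ∈ t, c i • (u i * u i) := by
    rw [hG, map_add, mul_add, map_mul, map_pow, map_prod, map_sum, Finset.mul_sum]
    congr 1
    · have := hprod t subset_rfl
      calc y * y * (θ f * (∏ i ∈ t, θ (e i)) ^ 2)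
          = θ f * ((∏ i ∈ t, u i) * ∏ i ∈ t, θ (e i)) ^ 2 := by rw [hy]; ring
        _ = θ f := by rw [this, one_pow, mul_one]
    · refine Finset.sum_congr rfl fun i hi => ?_
      have := hprod (t.erase i) (Finset.erase_subset _ _)
      have hC : θ (C (c i)) = algebraMap ℝ (Localization D) (c i) :=
        (IsScalarTower.algebraMap_apply ℝ (MvPolynomial (Fin n) ℝ) (Localization D) (c i)).symm
      rw [hy, ← Finset.mul_prod_erase t _ hi, map_mul, map_pow, map_prod, Algebra.smul_def, ← hC]
      calc _ = θ (C (c i)) * (u i * u i) *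
            ((∏ j ∈ t.erase i, u j) * ∏ j ∈ t.erase i, θ (e j)) ^ 2 := by ring
        _ = _ := by rw [this, one_pow, mul_one]
  have e1 : (L ∘ₗ LinearMap.mulLeft ℝ (y * y)) (θ G) = L (y * y * θ G) := rfl
  rw [e1, hsum, map_add, map_sum] at key
  simpa only [map_smul, smul_eq_mul] using key

end

/-- Every polynomial nonnegative on `K_S \ K`, with `K` a compact
subset of `⋃_{d ∈ D} Z(d)`, lies in the closure of `T_S^E` in the finest locally convex
topology. -/
theorem nonneg_off_compact_mem_closure
    {n m : ℕ} (D : Submonoid (MvPolynomial (Fin n) ℝ))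
    (hD0 : (0 : MvPolynomial (Fin n) ℝ) ∉ D)
    (g : Fin m → MvPolynomial (Fin n) ℝ)
    (hKne : (KS g).Nonempty)
    (p : MvPolynomial (Fin n) ℝ) (hpD : p ∈ D)
    (k : ℕ) (hk : 1 ≤ k)
    (hp1 : ∀ x ∈ KS g, 1 ≤ eval x p)
    (hpgrow : ∀ x ∈ KS g, ∑ i, (x i) ^ 2 ≤ (k : ℝ) * eval x p)
    (K : Set (Fin n → ℝ)) (hKc : IsCompact K)
    (hKZ : K ⊆ ⋃ d ∈ (D : Set (MvPolynomial (Fin n) ℝ)), Zset d)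
    (f : MvPolynomial (Fin n) ℝ)
    (hf : ∀ x ∈ KS g \ K, 0 ≤ eval x f) :
    algebraMap (MvPolynomial (Fin n) ℝ) (Localization D) f ∈
      dualClosure (genPreordering fun i =>
        algebraMap (MvPolynomial (Fin n) ℝ) (Localization D) (g i)) := by
  intro L hLgen
  have hL : ∀ t ∈ semiPre fun i => algebraMap _ (Localization D) (g i), 0 ≤ L t :=
    fun t ht => hLgen t (semiPre_subset_genPreordering _ ht)
  obtain ⟨R, hR⟩ := hKc.isBounded.exists_norm_le
  obtain ⟨B, hB0, hB⟩ := exists_lipschitz R f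
  have hd : ∀ a : Fin n → ℝ, ∃ d : D, a ∈ K → eval a (d : MvPolynomial (Fin n) ℝ) = 0 := by
    intro a
    by_cases ha : a ∈ K
    · obtain ⟨d, hd, hda⟩ := Set.mem_iUnion₂.1 (hKZ ha)
      exact ⟨⟨d, hd⟩, fun _ => hda⟩
    · exact ⟨1, fun h => absurd h ha⟩
  -- Only the values of `d` on `K` matter; elsewhere it is `1`.
  choose d hd using hd
  choose c hc0 hc using fun a => exists_lipschitz R (d a : MvPolynomial (Fin n) ℝ)
  let u : (Fin n → ℝ) → Localization D := fun a => Localization.mk 1 (d a ^ (n + 1))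
  have hu : ∀ a, u a * algebraMap _ (Localization D)
      ((d a : MvPolynomial (Fin n) ℝ) ^ (n + 1)) = 1 := by
    intro a
    rw [← Localization.mk_one_eq_algebraMap, Localization.mk_mul, one_mul, mul_one]
    exact Localization.mk_self (d a ^ (n + 1))
  have huu : ∀ a, 0 ≤ L (u a * u a) := fun a => hL _ (semiPre_sq _ (u a))
  -- The error term `B * η` below can be made arbitrarily small.
  have main : ∀ η : ℝ, 0 < η → 0 ≤ L (algebraMap _ (Localization D) f) + B * η := by
    intro η hη
    obtain ⟨t, δ, htK, hδ, hcov, hsum⟩ := exists_cheap_cover hKc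
      (fun a => c a ^ (2 * (n + 1)) * L (u a * u a))
      (fun a _ => mul_nonneg (pow_nonneg (hc0 a) _) (huu a)) hη
    have h := apply_add_sum_nonneg hpD hp1 hpgrow hL hf t
      (fun i => (d i.2 : MvPolynomial (Fin n) ℝ) ^ (n + 1)) (fun i => u i.2)
      (fun i _ => hu i.2) (fun i => B * (c i.2 * δ i.1) ^ (2 * (n + 1)))
      (fun i _ => mul_nonneg hB0 (pow_nonneg (mul_nonneg (hc0 _) (hδ _).1.le) _))
      (B := B) (fun x hx => (abs_le.1 (hB x x (hR x hx) (hR x hx)).1).1)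
      (by
        intro x hx
        obtain ⟨i, hi, hxi⟩ := hcov x hx
        refine ⟨i, hi, mul_le_mul_of_nonneg_left ?_ hB0⟩
        have h1 := (hc i.2 x i.2 (hR x hx) (hR _ (htK i hi))).2
        rw [hd i.2 (htK i hi), sub_zero] at h1
        rw [Metric.mem_ball, dist_eq_norm] at hxi
        have h2 := h1.trans (mul_le_mul_of_nonneg_left hxi.le (hc0 i.2))
        have h3 := pow_le_pow_left₀ (abs_nonneg _) h2 (2 * (n + 1))
        rw [Even.pow_abs (even_two_mul _)] at h3
        rw [map_pow, ← pow_mul, mul_comm (n + 1) 2]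
        exact h3)
    have e : ∑ i ∈ t, B * (c i.2 * δ i.1) ^ (2 * (n + 1)) * L (u i.2 * u i.2) =
        B * ∑ i ∈ t, δ i.1 ^ (2 * (n + 1)) * (c i.2 ^ (2 * (n + 1)) * L (u i.2 * u i.2)) := by
      rw [Finset.mul_sum]
      exact Finset.sum_congr rfl fun i _ => by rw [mul_pow]; ring
    rw [e] at h
    linarith [mul_le_mul_of_nonneg_left hsum hB0]
  refine le_of_forall_pos_le_add fun ε hε => ?_
  refine (main (ε / (B + 1)) (by positivity)).trans ?_
  have : B * (ε / (B + 1)) ≤ ε := by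
    rw [← mul_div_assoc, div_le_iff₀ (by positivity)]
    nlinarith
  linarith

end
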